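/- Let n ≥ 2, 1 ≤ s < ∞, and let Ω ⊆ ℝⁿ be the block domain. Then Ω is an L^s-averaging domain if and only if s < n·log₂(3) − 1. -/

import Mathlib

open MeasureTheory Metric Set
open scoped ENNReal

/-- The normalized `L^s`-mean oscillation integral `(1/|E|) ∫_E |u - u_E|^s dz`. -/
noncomputable def lsAvgE {n : ℕ} (s : ℝ) (u : EuclideanSpace ℝ (Fin n) → ℝ)
    (E : Set (EuclideanSpace ℝ (Fin n))) : ℝ≥0∞ :=
  (volume E)⁻¹ * ∫⁻ z in E, ENNReal.ofReal (|u z - (⨍ y in E, u y)| ^ s)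

/-- `Ω` is an `L^s`-averaging domain: there is a finite constant `C` such that for every
locally integrable `u`, `((1/|Ω|) ∫_Ω |u - u_Ω|^s)^{1/s} ≤ C · sup_B ((1/|B|) ∫_B |u - u_B|^s)^{1/s}`,
the supremum over all open balls `B ⊆ Ω`. -/
def IsLsAveragingDomain {n : ℕ} (s : ℝ) (Ω : Set (EuclideanSpace ℝ (Fin n))) : Prop :=
  ∃ C : ℝ≥0∞, C ≠ ⊤ ∧ ∀ u : EuclideanSpace ℝ (Fin n) → ℝ,
    MeasureTheory.LocallyIntegrableOn u Ω volume →
      (lsAvgE s u Ω) ^ (1/s) ≤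
        C * ⨆ (x : EuclideanSpace ℝ (Fin n)) (ρ : ℝ) (_ : 0 < ρ ∧ ball x ρ ⊆ Ω),
          (lsAvgE s u (ball x ρ)) ^ (1/s)

/-- Edge length of the `m`-th cube of the block domain: `3^{-⌊log₂ m⌋}`. -/
noncomputable def blockEdge (m : ℕ) : ℝ := (1/3 : ℝ) ^ (Nat.log 2 m)

/-- Height of the bottom face of the `m`-th cube of the block domain. -/
noncomputable def blockBottom (m : ℕ) : ℝ := ∑ i ∈ Finset.Ico 1 m, blockEdge i

/-- The `m`-th closed cube of the block domain, of edge length `3^{-⌊log₂ m⌋}`, stacked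
along the first coordinate axis, centered on the common vertical axis through
`(·, 1/2, …, 1/2)`. -/
def blockCube (n : ℕ) [NeZero n] (m : ℕ) : Set (EuclideanSpace ℝ (Fin n)) :=
  {z | z 0 ∈ Set.Icc (blockBottom m) (blockBottom m + blockEdge m) ∧
    ∀ i : Fin n, i ≠ 0 → |z i - 1/2| ≤ blockEdge m / 2}

/-- The block domain: the interior of the union of the stacked cubes `Ω_m`, `m ≥ 1`. -/
def blockDomain (n : ℕ) [NeZero n] : Set (EuclideanSpace ℝ (Fin n)) :=
  interior (⋃ m ∈ Set.Ici 1, blockCube n m)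

/-!
If every ball in `Ω` has `L^s`-mean oscillation at most `M`, then the averages of `u` over two balls
that are joined by a chain of `N` substantially overlapping balls in `Ω` differ by at most a
constant times `N * M`. In the block domain the centre of the `m`-th cube is joined to that of the
first one by a chain along the axis of about `m` balls, and a point of the `m`-th cube in the `k`-th
shell towards the faces, whose volume decays geometrically in `k`, costs about `k` more. Hence
`∫ |u - c| ^ s` over `Ω` is at most a constant times `M ^ s * ∑ e_m ^ n * m ^ s`, where `e_m` is the
edge length of the `m`-th cube. Since `e_m` is comparable to `m ^ (-log₂ 3)`, this series converges
exactly for `s < n * log₂ 3 - 1`.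

Conversely, the tip of the domain is at height `3`, and `u z = (3 - z₀) ^ (-β)` with
`β = log_{3/2} 2` is comparable to `m` on the `m`-th cube. At distance `τ` below the tip the domain
has width at most `τ ^ (β + 1)`, up to a constant, while a ball of radius `ρ` in the domain has
there a section of radius `√(ρ ^ 2 - t ^ 2)`, where `t` is the height relative to its centre. So
the derivative of `u`, which is `β * τ ^ (-(β + 1))`, is at most a constant times
`1 / √(ρ ^ 2 - t ^ 2)`, and the integral of this bound over the ball's heights does not depend on
`ρ`. Thus `u` has bounded oscillation on the balls in `Ω`; if `Ω` is averaging then `u` is in `L^s`,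
and the same series converges.
-/

open scoped NNReal ProbabilityTheory

/-! ### Oscillation with respect to a probability measure -/

section ProbabilityMeasure

variable {α E : Type*} [MeasurableSpace α] {μ : Measure α} [IsProbabilityMeasure μ]
  [NormedAddCommGroup E] {f : α → E} {p : ℝ≥0∞}

theorem eLpNorm_sub_const_le_add_edist (hf : AEStronglyMeasurable f μ) (hp : 1 ≤ p) (a b : E) :
    eLpNorm (fun x => f x - b) p μ ≤ eLpNorm (fun x => f x - a) p μ + edist a b := by
  have hsplit : (fun x => f x - b) = (fun x => f x - a) + fun _ => a - b := by
    ext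
    simp
  calc eLpNorm (fun x => f x - b) p μ
      ≤ eLpNorm (fun x => f x - a) p μ + eLpNorm (fun _ => a - b) p μ := by
        rw [hsplit]
        exact eLpNorm_add_le (hf.sub aestronglyMeasurable_const) aestronglyMeasurable_const hp
    _ = eLpNorm (fun x => f x - a) p μ + edist a b := by
        rw [eLpNorm_const _ (zero_lt_one.trans_le hp).ne' (IsProbabilityMeasure.ne_zero μ),
          measure_univ, ENNReal.one_rpow, mul_one, edist_eq_enorm_sub]

variable [NormedSpace ℝ E] [CompleteSpace E]

theorem edist_integral_le_eLpNorm_sub_const (hf : AEStronglyMeasurable f μ) (hp : 1 ≤ p) (c : E) :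
    edist (∫ x, f x ∂μ) c ≤ eLpNorm (fun x => f x - c) p μ := by
  obtain htop | htop := eq_or_ne (eLpNorm (fun x => f x - c) p μ) ⊤
  · exact htop ▸ le_top
  have hfc : AEStronglyMeasurable (fun x => f x - c) μ := hf.sub aestronglyMeasurable_const
  have hint : Integrable (fun x => f x - c) μ := MemLp.integrable hp ⟨hfc, htop.lt_top⟩
  have hf_int : Integrable f μ := by
    simpa [Pi.add_def] using hint.add (integrable_const c)
  calc edist (∫ x, f x ∂μ) c = ‖∫ x, (f x - c) ∂μ‖ₑ := by
        rw [integral_sub hf_int (integrable_const c), integral_const, probReal_univ, one_smul,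
          edist_eq_enorm_sub]
    _ ≤ eLpNorm (fun x => f x - c) 1 μ := by
        rw [eLpNorm_one_eq_lintegral_enorm]
        exact enorm_integral_le_lintegral_enorm _
    _ ≤ eLpNorm (fun x => f x - c) p μ := eLpNorm_le_eLpNorm_of_exponent_le hp hfc

theorem eLpNorm_sub_integral_le_two_mul (hf : AEStronglyMeasurable f μ) (hp : 1 ≤ p) (c : E) :
    eLpNorm (fun x => f x - ∫ y, f y ∂μ) p μ ≤ 2 * eLpNorm (fun x => f x - c) p μ := by
  calc eLpNorm (fun x => f x - ∫ y, f y ∂μ) p μ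
      ≤ eLpNorm (fun x => f x - c) p μ + edist c (∫ y, f y ∂μ) :=
        eLpNorm_sub_const_le_add_edist hf hp c _
    _ ≤ 2 * eLpNorm (fun x => f x - c) p μ := by
        rw [two_mul, edist_comm]
        gcongr
        exact edist_integral_le_eLpNorm_sub_const hf hp c

end ProbabilityMeasure

/-! ### Averages over sets -/

section SetAverage

variable {α E : Type*} [MeasurableSpace α] {μ : Measure α} {A B : Set α}
  [NormedAddCommGroup E] {f : α → E}

theorem cond_le_smul_cond_of_subset (hAB : A ⊆ B) (hB₀ : μ B ≠ 0) (hB : μ B ≠ ⊤) :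
    μ[|A] ≤ (μ B / μ A) • μ[|B] := by
  rw [ProbabilityTheory.cond, ProbabilityTheory.cond, smul_smul, ENNReal.div_eq_inv_mul, mul_assoc,
    ENNReal.mul_inv_cancel hB₀ hB, mul_one]
  gcongr

theorem laverage_enorm_rpow_eq_eLpNorm_cond {s : ℝ} (hs : 0 < s) :
    ⨍⁻ x in A, ‖f x‖ₑ ^ s ∂μ = eLpNorm f (ENNReal.ofReal s) μ[|A] ^ s := by
  rw [setLAverage_eq', eLpNorm_eq_lintegral_rpow_enorm_toReal (by simpa using hs)
    ENNReal.ofReal_ne_top, ENNReal.toReal_ofReal hs.le, ← ENNReal.rpow_mul,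
    one_div_mul_cancel hs.ne', ENNReal.rpow_one, ProbabilityTheory.cond]

theorem edist_setAverage_le_mul_eLpNorm_cond [NormedSpace ℝ E] [CompleteSpace E]
    (hAB : A ⊆ B) (hA₀ : μ A ≠ 0) (hB : μ B ≠ ⊤) (hf : AEStronglyMeasurable f (μ.restrict B))
    (c : E) {p : ℝ≥0∞} (hp : 1 ≤ p) :
    edist (⨍ x in A, f x ∂μ) c ≤ μ B / μ A * eLpNorm (fun x => f x - c) p μ[|B] := by
  have hA : μ A ≠ ⊤ := measure_ne_top_of_subset hAB hB
  have hB₀ : μ B ≠ 0 := fun h => hA₀ (measure_mono_null hAB h)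
  have := ProbabilityTheory.cond_isProbabilityMeasure_of_finite hA₀ hA
  have := ProbabilityTheory.cond_isProbabilityMeasure_of_finite hB₀ hB
  have hfA : AEStronglyMeasurable f μ[|A] := (hf.mono_set hAB).smul_measure _
  have hfB : AEStronglyMeasurable f μ[|B] := hf.smul_measure _
  calc edist (⨍ x in A, f x ∂μ) c
      ≤ eLpNorm (fun x => f x - c) 1 μ[|A] := by
        rw [setAverage_eq']
        exact edist_integral_le_eLpNorm_sub_const hfA le_rfl c
    _ ≤ μ B / μ A * eLpNorm (fun x => f x - c) 1 μ[|B] := by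
        rw [← eLpNorm_one_smul_measure]
        exact eLpNorm_mono_measure _ (cond_le_smul_cond_of_subset hAB hB₀ hB)
    _ ≤ μ B / μ A * eLpNorm (fun x => f x - c) p μ[|B] := by
        gcongr
        exact eLpNorm_le_eLpNorm_of_exponent_le hp (hfB.sub aestronglyMeasurable_const)

end SetAverage

theorem lsAvgE_rpow_eq_eLpNorm_cond {n : ℕ} {s : ℝ} (hs : 0 < s)
    (u : EuclideanSpace ℝ (Fin n) → ℝ) (A : Set (EuclideanSpace ℝ (Fin n))) :
    lsAvgE s u A ^ (1 / s) =
      eLpNorm (fun z => u z - ⨍ y in A, u y) (ENNReal.ofReal s) volume[|A] := by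
  have henorm (t : ℝ) : ENNReal.ofReal (|t| ^ s) = ‖t‖ₑ ^ s := by
    rw [Real.enorm_eq_ofReal_abs, ENNReal.ofReal_rpow_of_nonneg (abs_nonneg t) hs.le]
  simp only [lsAvgE, henorm]
  rw [← ENNReal.div_eq_inv_mul, ← setLAverage_eq, laverage_enorm_rpow_eq_eLpNorm_cond hs,
    ← ENNReal.rpow_mul, mul_one_div_cancel hs.ne', ENNReal.rpow_one]

/-! ### Double counting over balls -/

section DoubleCounting

theorem lintegral_setLIntegral_ball_comm {X : Type*} [PseudoMetricSpace X]
    [SecondCountableTopology X] [MeasurableSpace X] [OpensMeasurableSpace X] {μ ν : Measure X}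
    [SFinite μ] [SFinite ν] {f : X → ℝ≥0∞} (hf : AEMeasurable f μ) (r : ℝ) :
    ∫⁻ x, ∫⁻ _ in ball x r, f x ∂ν ∂μ = ∫⁻ y, ∫⁻ x in ball y r, f x ∂μ ∂ν := by
  have hD : MeasurableSet {q : X × X | dist q.1 q.2 < r} :=
    (isOpen_lt continuous_dist continuous_const).measurableSet
  calc ∫⁻ x, ∫⁻ _ in ball x r, f x ∂ν ∂μ
      = ∫⁻ x, ∫⁻ y, {q : X × X | dist q.1 q.2 < r}.indicator (fun q => f q.1) (x, y) ∂ν ∂μ := by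
        simp_rw [← lintegral_indicator measurableSet_ball]
        simp only [indicator, mem_ball, mem_ofPred_eq, dist_comm]
    _ = ∫⁻ y, ∫⁻ x, {q : X × X | dist q.1 q.2 < r}.indicator (fun q => f q.1) (x, y) ∂μ ∂ν :=
        lintegral_lintegral_swap (hf.comp_fst.indicator hD)
    _ = ∫⁻ y, ∫⁻ x in ball y r, f x ∂μ ∂ν := by
        simp_rw [← lintegral_indicator measurableSet_ball]
        simp only [indicator, mem_ball, mem_ofPred_eq]

theorem setLIntegral_le_setLIntegral_laverage_ball {E : Type*} [NormedAddCommGroup E]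
    [NormedSpace ℝ E] [FiniteDimensional ℝ E] [MeasurableSpace E] [BorelSpace E] {μ : Measure E}
    [μ.IsAddHaarMeasure] {S T : Set E} {r : ℝ} (hr : 0 < r) (hS : MeasurableSet S)
    (hST : ∀ x ∈ S, ball x r ⊆ T) {f : E → ℝ≥0∞} (hf : AEMeasurable f (μ.restrict S)) :
    ∫⁻ x in S, f x ∂μ ≤ ∫⁻ y in T, ⨍⁻ x in ball y r, f x ∂μ ∂μ := by
  have hvol (y : E) : μ (ball y r) = μ (ball 0 r) := Measure.addHaar_ball_center μ y r
  have hvol₀ : μ (ball 0 r) ≠ 0 := (measure_ball_pos μ 0 hr).ne'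
  have hvol_top : μ (ball (0 : E) r) ≠ ⊤ := measure_ball_lt_top.ne
  calc ∫⁻ x in S, f x ∂μ
      = (μ (ball 0 r))⁻¹ * ∫⁻ x in S, ∫⁻ _ in ball x r, f x ∂(μ.restrict T) ∂μ := by
        rw [← lintegral_const_mul' _ _ (ENNReal.inv_ne_top.2 hvol₀)]
        refine setLIntegral_congr_fun hS fun x hx => ?_
        rw [setLIntegral_const, Measure.restrict_apply measurableSet_ball,
          inter_eq_left.2 (hST x hx), hvol x, mul_comm, mul_assoc,
          ENNReal.mul_inv_cancel hvol₀ hvol_top, mul_one]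
    _ = (μ (ball 0 r))⁻¹ * ∫⁻ y in T, ∫⁻ x in ball y r, f x ∂(μ.restrict S) ∂μ := by
        rw [lintegral_setLIntegral_ball_comm hf]
    _ ≤ (μ (ball 0 r))⁻¹ * ∫⁻ y in T, ∫⁻ x in ball y r, f x ∂μ ∂μ := by
        gcongr
        exact Measure.restrict_le_self
    _ = ∫⁻ y in T, ⨍⁻ x in ball y r, f x ∂μ ∂μ := by
        rw [← lintegral_const_mul' _ _ (ENNReal.inv_ne_top.2 hvol₀)]
        simp_rw [setLAverage_eq, ENNReal.div_eq_inv_mul, hvol]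

end DoubleCounting

/-! ### Mean oscillation over balls -/

section BallOscillation

variable {n : ℕ} {s : ℝ} {Ω : Set (EuclideanSpace ℝ (Fin n))}

/-- The `L^s`-mean oscillation of `u` over every ball contained in `Ω` is at most `M`; the least
such `M` is the supremum in `IsLsAveragingDomain`. -/
def HasBallOscillationLE (s : ℝ) (Ω : Set (EuclideanSpace ℝ (Fin n)))
    (u : EuclideanSpace ℝ (Fin n) → ℝ) (M : ℝ≥0) : Prop :=
  ∀ ⦃x r⦄, 0 < r → ball x r ⊆ Ω → lsAvgE s u (ball x r) ^ (1 / s) ≤ M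

theorem isLsAveragingDomain_iff_forall_hasBallOscillationLE :
    IsLsAveragingDomain s Ω ↔ ∃ C : ℝ≥0, ∀ u, LocallyIntegrableOn u Ω →
      ∀ M, HasBallOscillationLE s Ω u M → lsAvgE s u Ω ^ (1 / s) ≤ C * M := by
  constructor
  · rintro ⟨C, hC, h⟩
    refine ⟨C.toNNReal, fun u hu M hM => (h u hu).trans ?_⟩
    rw [ENNReal.coe_toNNReal hC]
    gcongr
    exact iSup_le fun x => iSup_le fun r => iSup_le fun hr => hM hr.1 hr.2
  · rintro ⟨C, h⟩
    -- `C + 1` rather than `C`, since `0 * ⊤ = 0`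
    refine ⟨C + 1, by finiteness, fun u hu => ?_⟩
    set M := ⨆ (x : EuclideanSpace ℝ (Fin n)) (r : ℝ) (_ : 0 < r ∧ ball x r ⊆ Ω),
      lsAvgE s u (ball x r) ^ (1 / s)
    obtain hM | hM := eq_or_ne M ⊤
    · simp [hM]
    calc lsAvgE s u Ω ^ (1 / s) ≤ C * (M.toNNReal : ℝ≥0∞) := by
          refine h u hu _ fun x r hr hx => ?_
          rw [ENNReal.coe_toNNReal hM]
          exact le_iSup_of_le x (le_iSup_of_le r (le_iSup_of_le ⟨hr, hx⟩ le_rfl))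
      _ ≤ (C + 1) * M := by
          rw [ENNReal.coe_toNNReal hM]
          gcongr
          exact le_self_add

/-- For every `u`, the averages of `u` over `ball x r` and `ball y ρ` differ by at most `N` times
the oscillation of `u` over the balls in `Ω`. This replaces the bound `N` on the quasihyperbolic
distance between the two balls, which is only ever used through this consequence. -/
def BallLinked (s : ℝ) (Ω : Set (EuclideanSpace ℝ (Fin n))) (N : ℝ≥0)
    (x : EuclideanSpace ℝ (Fin n)) (r : ℝ) (y : EuclideanSpace ℝ (Fin n)) (ρ : ℝ) : Prop :=
  ∀ ⦃u⦄, LocallyIntegrableOn u Ω → ∀ ⦃M⦄, HasBallOscillationLE s Ω u M →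
    edist (⨍ z in ball x r, u z) (⨍ z in ball y ρ, u z) ≤ N * M

namespace BallLinked

variable {x y z : EuclideanSpace ℝ (Fin n)} {r ρ τ : ℝ} {N N' K : ℝ≥0}

theorem refl (s : ℝ) (Ω : Set (EuclideanSpace ℝ (Fin n))) (x : EuclideanSpace ℝ (Fin n)) (r : ℝ) :
    BallLinked s Ω 0 x r x r :=
  fun u _ M _ => by simp

theorem symm (h : BallLinked s Ω N x r y ρ) : BallLinked s Ω N y ρ x r :=
  fun _ hu _ hM => edist_comm (α := ℝ) _ _ ▸ h hu hM

theorem trans (h : BallLinked s Ω N x r y ρ) (h' : BallLinked s Ω N' y ρ z τ) :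
    BallLinked s Ω (N + N') x r z τ := fun u hu M hM =>
  calc edist (⨍ w in ball x r, u w) (⨍ w in ball z τ, u w)
      ≤ N * M + N' * M := (edist_triangle _ _ _).trans (add_le_add (h hu hM) (h' hu hM))
    _ = (N + N' : ℝ≥0) * M := by rw [ENNReal.coe_add, add_mul]

theorem mono (h : BallLinked s Ω N x r y ρ) (hN : N ≤ N') : BallLinked s Ω N' x r y ρ :=
  fun u hu M hM => (h hu hM).trans (by gcongr)

theorem of_ball_subset_ball (hs : 1 ≤ s) (hΩ : ball y ρ ⊆ Ω) (hr : 0 < r)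
    (hsub : ball x r ⊆ ball y ρ) (hρ : ρ ≤ K * r) : BallLinked s Ω (K ^ n) x r y ρ := by
  intro u hu M hM
  have hρ₀ : 0 < ρ := pos_of_mem_ball (hsub (mem_ball_self hr))
  have hmeas : AEStronglyMeasurable u (volume.restrict (ball y ρ)) :=
    (hu.mono_set hΩ).aestronglyMeasurable
  have hvol : volume (ball y ρ) / volume (ball x r) ≤ (K : ℝ≥0∞) ^ n := by
    rw [ENNReal.div_le_iff (measure_ball_pos _ _ hr).ne' measure_ball_lt_top.ne,
      Measure.addHaar_ball_of_pos _ _ hρ₀, Measure.addHaar_ball_of_pos _ _ hr, ← mul_assoc]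
    gcongr
    rw [finrank_euclideanSpace_fin, ENNReal.ofReal_pow hρ₀.le, ENNReal.ofReal_pow hr.le, ← mul_pow]
    gcongr
    exact (ENNReal.ofReal_le_ofReal hρ).trans_eq (by simp [ENNReal.ofReal_mul])
  calc edist (⨍ z in ball x r, u z) (⨍ z in ball y ρ, u z)
      ≤ volume (ball y ρ) / volume (ball x r) * lsAvgE s u (ball y ρ) ^ (1 / s) := by
        rw [lsAvgE_rpow_eq_eLpNorm_cond (zero_lt_one.trans_le hs)]
        exact edist_setAverage_le_mul_eLpNorm_cond hsub (measure_ball_pos _ _ hr).ne'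
          measure_ball_lt_top.ne hmeas _ (by simpa using hs)
    _ ≤ (K ^ n : ℝ≥0) * M := by
        rw [ENNReal.coe_pow]
        gcongr
        exact hM hρ₀ hΩ

theorem of_common_ball {w : EuclideanSpace ℝ (Fin n)} {δ : ℝ} (hs : 1 ≤ s) (hδ : 0 < δ)
    (hxΩ : ball x r ⊆ Ω) (hyΩ : ball y ρ ⊆ Ω) (hx : ball w δ ⊆ ball x r)
    (hy : ball w δ ⊆ ball y ρ) (hr : r ≤ K * δ) (hρ : ρ ≤ K * δ) :
    BallLinked s Ω (2 * K ^ n) x r y ρ :=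
  two_mul (K ^ n) ▸ (of_ball_subset_ball hs hxΩ hδ hx hr).symm.trans
    (of_ball_subset_ball hs hyΩ hδ hy hρ)

theorem laverage_enorm_sub_rpow_le (h : BallLinked s Ω N y ρ x r) (hs : 1 ≤ s) (hρ : 0 < ρ)
    (hy : ball y ρ ⊆ Ω) {u : EuclideanSpace ℝ (Fin n) → ℝ} (hu : LocallyIntegrableOn u Ω) {M : ℝ≥0}
    (hM : HasBallOscillationLE s Ω u M) :
    ⨍⁻ z in ball y ρ, ‖u z - ⨍ w in ball x r, u w‖ₑ ^ s ∂volume ≤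
      ((1 + N : ℝ≥0) * M : ℝ≥0∞) ^ s := by
  have hs₀ : 0 < s := zero_lt_one.trans_le hs
  have := ProbabilityTheory.cond_isProbabilityMeasure_of_finite
    (measure_ball_pos volume y hρ).ne' measure_ball_lt_top.ne
  have hmeas : AEStronglyMeasurable u volume[|ball y ρ] :=
    (hu.mono_set hy).aestronglyMeasurable.smul_measure _
  rw [laverage_enorm_rpow_eq_eLpNorm_cond hs₀]
  gcongr
  calc eLpNorm (fun z => u z - ⨍ w in ball x r, u w) (ENNReal.ofReal s) volume[|ball y ρ]
      ≤ lsAvgE s u (ball y ρ) ^ (1 / s) +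
          edist (⨍ w in ball y ρ, u w) (⨍ w in ball x r, u w) := by
        rw [lsAvgE_rpow_eq_eLpNorm_cond hs₀]
        exact eLpNorm_sub_const_le_add_edist hmeas (by simpa using hs) _ _
    _ ≤ M + N * M := add_le_add (hM hρ hy) (h hu hM)
    _ = (1 + N : ℝ≥0) * M := by rw [ENNReal.coe_add, ENNReal.coe_one, add_mul, one_mul]

theorem setLIntegral_enorm_sub_rpow_le {S T : Set (EuclideanSpace ℝ (Fin n))} (hs : 1 ≤ s)
    (hρ : 0 < ρ) (hS : MeasurableSet S) (hT : MeasurableSet T) (hST : ∀ y ∈ S, ball y ρ ⊆ T)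
    (hTΩ : ∀ y ∈ T, ball y ρ ⊆ Ω) (hlink : ∀ y ∈ T, BallLinked s Ω N y ρ x r)
    {u : EuclideanSpace ℝ (Fin n) → ℝ} (hu : LocallyIntegrableOn u Ω) {M : ℝ≥0}
    (hM : HasBallOscillationLE s Ω u M) :
    ∫⁻ z in S, ‖u z - ⨍ w in ball x r, u w‖ₑ ^ s ≤
      ((1 + N : ℝ≥0) : ℝ≥0∞) ^ s * volume T * (M : ℝ≥0∞) ^ s := by
  have hSΩ : S ⊆ Ω := fun y hy =>
    hTΩ y (hST y hy (mem_ball_self hρ)) (mem_ball_self hρ)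
  have hmeas : AEMeasurable u (volume.restrict S) :=
    (hu.mono_set hSΩ).aestronglyMeasurable.aemeasurable
  calc ∫⁻ z in S, ‖u z - ⨍ w in ball x r, u w‖ₑ ^ s
      ≤ ∫⁻ y in T, ⨍⁻ z in ball y ρ, ‖u z - ⨍ w in ball x r, u w‖ₑ ^ s ∂volume :=
        setLIntegral_le_setLIntegral_laverage_ball hρ hS hST
          ((hmeas.sub_const _).enorm.pow_const s)
    _ ≤ ∫⁻ _ in T, ((1 + N : ℝ≥0) * M : ℝ≥0∞) ^ s :=
        setLIntegral_mono' hT fun y hy =>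
          (hlink y hy).laverage_enorm_sub_rpow_le hs hρ (hTΩ y hy) hu hM
    _ = ((1 + N : ℝ≥0) : ℝ≥0∞) ^ s * volume T * (M : ℝ≥0∞) ^ s := by
        rw [setLIntegral_const, ENNReal.mul_rpow_of_nonneg _ _ (zero_le_one.trans hs),
          mul_right_comm]

end BallLinked

theorem lsAvgE_rpow_le_two_mul_laverage (hs : 1 ≤ s) (hΩ₀ : volume Ω ≠ 0) (hΩ : volume Ω ≠ ⊤)
    {u : EuclideanSpace ℝ (Fin n) → ℝ} (hu : AEStronglyMeasurable u (volume.restrict Ω)) (c : ℝ) :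
    lsAvgE s u Ω ^ (1 / s) ≤ 2 * (⨍⁻ z in Ω, ‖u z - c‖ₑ ^ s ∂volume) ^ (1 / s) := by
  have hs₀ : 0 < s := zero_lt_one.trans_le hs
  have := ProbabilityTheory.cond_isProbabilityMeasure_of_finite hΩ₀ hΩ
  rw [lsAvgE_rpow_eq_eLpNorm_cond hs₀, laverage_enorm_rpow_eq_eLpNorm_cond hs₀,
    ← ENNReal.rpow_mul, mul_one_div_cancel hs₀.ne', ENNReal.rpow_one, setAverage_eq']
  exact eLpNorm_sub_integral_le_two_mul (μ := volume[|Ω]) (hu.smul_measure _) (by simpa using hs) c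

theorem hasBallOscillationLE_of_abs_sub_center_le (hs : 1 ≤ s) {u : EuclideanSpace ℝ (Fin n) → ℝ}
    (hu : LocallyIntegrableOn u Ω) {D : ℝ≥0}
    (h : ∀ x r, 0 < r → ball x r ⊆ Ω → ∀ z ∈ ball x r, |u z - u x| ≤ D) :
    HasBallOscillationLE s Ω u (2 * D) := by
  intro x r hr hx
  have hs₀ : 0 < s := zero_lt_one.trans_le hs
  have hvol₀ : volume (ball x r) ≠ 0 := (measure_ball_pos _ _ hr).ne'
  have hvol : volume (ball x r) ≠ ⊤ := measure_ball_lt_top.ne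
  calc lsAvgE s u (ball x r) ^ (1 / s)
      ≤ 2 * (⨍⁻ z in ball x r, ‖u z - u x‖ₑ ^ s ∂volume) ^ (1 / s) :=
        lsAvgE_rpow_le_two_mul_laverage hs hvol₀ hvol (hu.mono_set hx).aestronglyMeasurable _
    _ ≤ 2 * (⨍⁻ _ in ball x r, (D : ℝ≥0∞) ^ s ∂volume) ^ (1 / s) := by
        rw [setLAverage_eq, setLAverage_eq]
        gcongr 2 * (?_ / _) ^ _
        refine setLIntegral_mono' measurableSet_ball fun _ hz => ?_
        gcongr
        rw [enorm_le_coe, ← NNReal.coe_le_coe]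
        exact h x r hr hx _ hz
    _ = (2 * D : ℝ≥0) := by
        rw [setLAverage_const hvol₀ hvol, ← ENNReal.rpow_mul, mul_one_div_cancel hs₀.ne',
          ENNReal.rpow_one, ENNReal.coe_mul, ENNReal.coe_ofNat]

theorem isLsAveragingDomain_of_ballLinked_cover {ι : Type*} [Countable ι] (hs : 1 ≤ s)
    (hΩ₀ : volume Ω ≠ 0) (hΩ : volume Ω ≠ ⊤) {S T : ι → Set (EuclideanSpace ℝ (Fin n))}
    {ρ : ι → ℝ} {N : ι → ℝ≥0} {x : EuclideanSpace ℝ (Fin n)} {r : ℝ} (hρ : ∀ i, 0 < ρ i)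
    (hS : ∀ i, MeasurableSet (S i)) (hT : ∀ i, MeasurableSet (T i))
    (hcover : Ω ≤ᵐ[volume] ⋃ i, S i) (hST : ∀ i, ∀ y ∈ S i, ball y (ρ i) ⊆ T i)
    (hTΩ : ∀ i, ∀ y ∈ T i, ball y (ρ i) ⊆ Ω)
    (hlink : ∀ i, ∀ y ∈ T i, BallLinked s Ω (N i) y (ρ i) x r)
    (hsum : ∑' i, ((1 + N i : ℝ≥0) : ℝ≥0∞) ^ s * volume (T i) ≠ ⊤) :
    IsLsAveragingDomain s Ω := by
  have hs₀ : 0 < s := zero_lt_one.trans_le hs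
  set A := ∑' i, ((1 + N i : ℝ≥0) : ℝ≥0∞) ^ s * volume (T i)
  have hC : 2 * (A / volume Ω) ^ (1 / s) ≠ ⊤ := by
    have := ENNReal.div_ne_top hsum hΩ₀
    finiteness
  refine isLsAveragingDomain_iff_forall_hasBallOscillationLE.2
    ⟨(2 * (A / volume Ω) ^ (1 / s)).toNNReal, fun u hu M hM => ?_⟩
  set c := ⨍ w in ball x r, u w
  have hint : ∫⁻ z in Ω, ‖u z - c‖ₑ ^ s ≤ A * (M : ℝ≥0∞) ^ s := by
    calc ∫⁻ z in Ω, ‖u z - c‖ₑ ^ s ≤ ∫⁻ z in ⋃ i, S i, ‖u z - c‖ₑ ^ s :=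
          lintegral_mono' (Measure.restrict_mono_ae hcover) le_rfl
      _ ≤ ∑' i, ∫⁻ z in S i, ‖u z - c‖ₑ ^ s := lintegral_iUnion_le _ _
      _ ≤ ∑' i, ((1 + N i : ℝ≥0) : ℝ≥0∞) ^ s * volume (T i) * (M : ℝ≥0∞) ^ s :=
          ENNReal.tsum_le_tsum fun i => BallLinked.setLIntegral_enorm_sub_rpow_le hs (hρ i)
            (hS i) (hT i) (hST i) (hTΩ i) (hlink i) hu hM
      _ = A * (M : ℝ≥0∞) ^ s := ENNReal.tsum_mul_right
  calc lsAvgE s u Ω ^ (1 / s) ≤ 2 * (⨍⁻ z in Ω, ‖u z - c‖ₑ ^ s ∂volume) ^ (1 / s) :=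
        lsAvgE_rpow_le_two_mul_laverage hs hΩ₀ hΩ hu.aestronglyMeasurable c
    _ ≤ 2 * (A / volume Ω * (M : ℝ≥0∞) ^ s) ^ (1 / s) := by
        rw [setLAverage_eq, ← ENNReal.mul_div_right_comm]
        gcongr
    _ = (2 * (A / volume Ω) ^ (1 / s)).toNNReal * M := by
        rw [ENNReal.coe_toNNReal hC, ENNReal.mul_rpow_of_nonneg _ _ (by positivity),
          ← ENNReal.rpow_mul, mul_one_div_cancel hs₀.ne', ENNReal.rpow_one, mul_assoc]

theorem IsLsAveragingDomain.memLp_of_hasBallOscillationLE (h : IsLsAveragingDomain s Ω) (hs : 0 < s)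
    (hΩ₀ : volume Ω ≠ 0) (hΩ : volume Ω ≠ ⊤) {u : EuclideanSpace ℝ (Fin n) → ℝ}
    (hu : LocallyIntegrableOn u Ω) {M : ℝ≥0} (hM : HasBallOscillationLE s Ω u M) :
    MemLp u (ENNReal.ofReal s) (volume.restrict Ω) := by
  obtain ⟨C, hC⟩ := isLsAveragingDomain_iff_forall_hasBallOscillationLE.1 h
  have := Fact.mk hΩ.lt_top
  set c := ⨍ y in Ω, u y
  have hsub : MemLp (fun z => u z - c) (ENNReal.ofReal s) volume[|Ω] := by
    refine ⟨(hu.aestronglyMeasurable.smul_measure _).sub aestronglyMeasurable_const, ?_⟩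
    rw [← lsAvgE_rpow_eq_eLpNorm_cond hs]
    exact (hC u hu M hM).trans_lt (by finiteness)
  have hsub' : MemLp (fun z => u z - c) (ENNReal.ofReal s) (volume.restrict Ω) := by
    have := hsub.smul_measure hΩ
    rwa [ProbabilityTheory.cond, smul_smul, ENNReal.mul_inv_cancel hΩ₀ hΩ, one_smul] at this
  simpa [Pi.add_def] using hsub'.add (memLp_const c)

end BallOscillation

/-! ### Cubes and their shells -/

section Cubes

theorem addHaar_closedBall_sdiff_ball_le {E : Type*} [NormedAddCommGroup E] [NormedSpace ℝ E]
    [FiniteDimensional ℝ E] [Nontrivial E] [MeasurableSpace E] [BorelSpace E] (μ : Measure E)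
    [μ.IsAddHaarMeasure] (x : E) (r : ℝ) {t : ℝ} (ht : 0 ≤ t) :
    μ (closedBall x r \ ball x ((1 - t) * r)) ≤
      ENNReal.ofReal (Module.finrank ℝ E * t) * μ (closedBall x r) := by
  obtain hr | hr := lt_or_ge r 0
  · simp [closedBall_eq_empty.2 hr]
  have hdim : (1 : ℝ) ≤ Module.finrank ℝ E := by exact_mod_cast Module.finrank_pos (R := ℝ) (M := E)
  obtain ht₁ | ht₁ := le_total 1 t
  · have hone : 1 ≤ ENNReal.ofReal (Module.finrank ℝ E * t) := by
      rw [ENNReal.one_le_ofReal]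
      nlinarith
    exact (measure_mono sdiff_subset).trans (le_mul_of_one_le_left' hone)
  · have hinner : 0 ≤ (1 - t) * r := mul_nonneg (sub_nonneg.2 ht₁) hr
    have hsub : ball x ((1 - t) * r) ⊆ closedBall x r :=
      (ball_subset_ball (by nlinarith)).trans ball_subset_closedBall
    have hbernoulli : 1 - Module.finrank ℝ E * t ≤ (1 - t) ^ Module.finrank ℝ E := by
      simpa [sub_eq_add_neg] using one_add_mul_le_pow (a := -t) (by linarith) (Module.finrank ℝ E)
    rw [measure_sdiff hsub measurableSet_ball.nullMeasurableSet measure_ball_lt_top.ne,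
      Measure.addHaar_closedBall μ x hr, Measure.addHaar_ball μ x hinner, ← mul_assoc,
      ← ENNReal.sub_mul fun _ _ => measure_ball_lt_top.ne,
      ← ENNReal.ofReal_sub _ (by positivity), ← ENNReal.ofReal_mul (by positivity), mul_pow]
    gcongr
    nlinarith [pow_nonneg hr (Module.finrank ℝ E)]

variable {n : ℕ}

/-- The distance on `EuclideanSpace ℝ (Fin n)` whose balls are axis-parallel cubes. -/
noncomputable abbrev supDist (x y : EuclideanSpace ℝ (Fin n)) : ℝ :=
  dist (WithLp.ofLp x) (WithLp.ofLp y)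

/-- The open axis-parallel cube with centre `c` and half-width `h`. -/
def openCube (c : EuclideanSpace ℝ (Fin n)) (h : ℝ) : Set (EuclideanSpace ℝ (Fin n)) :=
  {z | supDist z c < h}

/-- The closed region between the concentric cubes with centre `c` and half-widths `a` and `b`. -/
def cubeShell (c : EuclideanSpace ℝ (Fin n)) (a b : ℝ) : Set (EuclideanSpace ℝ (Fin n)) :=
  {z | supDist z c ∈ Icc a b}

theorem supDist_le_dist (x y : EuclideanSpace ℝ (Fin n)) : supDist x y ≤ dist x y := by
  simpa using (PiLp.lipschitzWith_ofLp 2 (fun _ : Fin n => ℝ)).dist_le_mul x y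

theorem dist_le_mul_supDist (x y : EuclideanSpace ℝ (Fin n)) : dist x y ≤ n * supDist x y := by
  have hsqrt : (n : ℝ) ^ (1 / 2 : ℝ) ≤ n := by
    rw [← Real.sqrt_eq_rpow, Real.sqrt_le_iff]
    exact ⟨n.cast_nonneg, by exact_mod_cast Nat.le_self_pow two_ne_zero n⟩
  calc dist x y ≤ (n : ℝ) ^ (1 / 2 : ℝ) * supDist x y := by
        simpa using (PiLp.antilipschitzWith_ofLp 2 (fun _ : Fin n => ℝ)).le_mul_dist x y
    _ ≤ n * supDist x y := by gcongr

theorem isOpen_openCube (c : EuclideanSpace ℝ (Fin n)) (h : ℝ) : IsOpen (openCube c h) :=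
  isOpen_lt (by fun_prop) continuous_const

theorem measurableSet_cubeShell (c : EuclideanSpace ℝ (Fin n)) (a b : ℝ) :
    MeasurableSet (cubeShell c a b) :=
  (isClosed_Icc.preimage (f := fun z => supDist z c) (by fun_prop)).measurableSet

theorem ball_subset_openCube {x c : EuclideanSpace ℝ (Fin n)} {r h : ℝ} (hr : supDist x c + r ≤ h) :
    ball x r ⊆ openCube c h := fun z hz =>
  calc supDist z c ≤ supDist z x + supDist x c := dist_triangle _ _ _
    _ < r + supDist x c := by gcongr; exact (supDist_le_dist z x).trans_lt hz
    _ ≤ h := by linarith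

theorem ball_subset_cubeShell {x c : EuclideanSpace ℝ (Fin n)} {a b r : ℝ}
    (hx : x ∈ cubeShell c (a + r) (b - r)) : ball x r ⊆ cubeShell c a b := by
  intro z hz
  have hzx : supDist z x < r := (supDist_le_dist z x).trans_lt hz
  have hzc : |supDist z c - supDist x c| ≤ supDist z x := abs_dist_sub_le _ _ _
  obtain ⟨hlower, hupper⟩ := abs_le.1 (hzc.trans hzx.le)
  exact ⟨by linarith [hx.1], by linarith [hx.2]⟩

theorem volume_openCube (c : EuclideanSpace ℝ (Fin n)) {h : ℝ} (hh : 0 < h) :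
    volume (openCube c h) = ENNReal.ofReal ((2 * h) ^ n) := by
  change volume (WithLp.ofLp ⁻¹' ball (WithLp.ofLp c) h) = _
  rw [(PiLp.volume_preserving_ofLp (Fin n)).measure_preimage measurableSet_ball.nullMeasurableSet,
    Real.volume_pi_ball _ hh, Fintype.card_fin]

theorem volume_setOf_supDist_eq (c : EuclideanSpace ℝ (Fin n)) {h : ℝ} (hh : h ≠ 0) :
    volume {z | supDist z c = h} = 0 := by
  change volume (WithLp.ofLp ⁻¹' sphere (WithLp.ofLp c) h) = _
  rw [(PiLp.volume_preserving_ofLp (Fin n)).measure_preimage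
    isClosed_sphere.measurableSet.nullMeasurableSet, Measure.addHaar_sphere_of_ne_zero _ _ hh]

theorem volume_cubeShell_le [NeZero n] (c : EuclideanSpace ℝ (Fin n)) {h b t : ℝ} (hh : 0 ≤ h)
    (ht : 0 ≤ t) (hb : b ≤ h) :
    volume (cubeShell c ((1 - t) * h) b) ≤ ENNReal.ofReal (n * t * (2 * h) ^ n) := by
  have hsub : cubeShell c ((1 - t) * h) b ⊆
      WithLp.ofLp ⁻¹' (closedBall (WithLp.ofLp c) h \ ball (WithLp.ofLp c) ((1 - t) * h)) :=
    fun z hz => ⟨hz.2.trans hb, not_lt.2 hz.1⟩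
  refine (measure_mono hsub).trans ?_
  rw [(PiLp.volume_preserving_ofLp (Fin n)).measure_preimage
    (measurableSet_closedBall.diff measurableSet_ball).nullMeasurableSet]
  refine (addHaar_closedBall_sdiff_ball_le _ _ _ ht).trans_eq ?_
  rw [Real.volume_pi_closedBall _ hh, Module.finrank_fin_fun, Fintype.card_fin,
    ← ENNReal.ofReal_mul (by positivity)]

/-- The ratio `θ` for which the shells `(1 - θ ^ k) h ≤ supDist z c ≤ (1 - θ ^ (k + 1)) h` are so
thin that the points of one shell are at Euclidean distance at most `θ ^ k h / 2` from the previous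
one. -/
noncomputable def shellRatio (n : ℕ) : ℝ := 1 - 1 / (2 * n)

theorem mul_one_sub_shellRatio (n : ℕ) [NeZero n] : n * (1 - shellRatio n) = 1 / 2 := by
  have : (n : ℝ) ≠ 0 := NeZero.ne _
  rw [shellRatio]
  field_simp
  ring

theorem one_half_le_shellRatio (n : ℕ) [NeZero n] : 1 / 2 ≤ shellRatio n := by
  have : (1 : ℝ) ≤ n := by exact_mod_cast NeZero.one_le
  nlinarith [mul_one_sub_shellRatio n]

theorem shellRatio_pos (n : ℕ) [NeZero n] : 0 < shellRatio n :=
  one_half_pos.trans_le (one_half_le_shellRatio n)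

theorem shellRatio_lt_one (n : ℕ) [NeZero n] : shellRatio n < 1 := by
  have : (1 : ℝ) ≤ n := by exact_mod_cast NeZero.one_le
  nlinarith [mul_one_sub_shellRatio n]

theorem openCube_subset_iUnion_cubeShell (c : EuclideanSpace ℝ (Fin n)) (h : ℝ) {θ : ℝ}
    (hθ₀ : 0 < θ) (hθ₁ : θ < 1) :
    openCube c h ⊆ ⋃ k : ℕ, cubeShell c ((1 - θ ^ k) * h) ((1 - θ ^ (k + 1)) * h) := by
  intro z hz
  have hh : 0 < h := dist_nonneg.trans_lt hz
  have hratio : supDist z c / h < 1 := (div_lt_one hh).2 hz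
  obtain ⟨k, hk, hk'⟩ := exists_nat_pow_near_of_lt_one (sub_pos.2 hratio)
    (sub_le_self _ (by positivity)) hθ₀ hθ₁
  refine mem_iUnion.2 ⟨k, ?_, ?_⟩
  · rw [← le_div_iff₀ hh]
    linarith
  · rw [← div_le_iff₀ hh]
    linarith

namespace BallLinked

variable [NeZero n] {s : ℝ} {Ω : Set (EuclideanSpace ℝ (Fin n))} {c y : EuclideanSpace ℝ (Fin n)}
  {h : ℝ}

theorem succ_shell (hs : 1 ≤ s) (hh : 0 < h) (hΩ : openCube c h ⊆ Ω) {k : ℕ}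
    (hy : supDist y c ≤ (1 - shellRatio n ^ (k + 1)) * h) :
    ∃ y', supDist y' c ≤ (1 - shellRatio n ^ k) * h ∧
      BallLinked s Ω (2 * 2 ^ n) y (shellRatio n ^ (k + 1) * h) y' (shellRatio n ^ k * h) := by
  set θ := shellRatio n
  have hθ : 0 < θ := shellRatio_pos n
  have hθ_half : 1 / 2 ≤ θ := one_half_le_shellRatio n
  have hpow : 0 ≤ 1 - θ ^ k := sub_nonneg.2 (pow_le_one₀ hθ.le (shellRatio_lt_one n).le)
  obtain ⟨w, hyw, hwc⟩ := exists_dist_le_le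
    (mul_nonneg (pow_nonneg hθ.le k) (mul_nonneg (sub_pos.2 (shellRatio_lt_one n)).le hh.le))
    (mul_nonneg hpow hh.le) (z := WithLp.ofLp c) (hy.trans_eq (by simp only [θ]; ring))
  have hdist : dist y (WithLp.toLp 2 w) ≤ θ ^ k * h / 2 :=
    calc dist y (WithLp.toLp 2 w) ≤ n * supDist y (WithLp.toLp 2 w) := dist_le_mul_supDist _ _
      _ ≤ n * (θ ^ k * ((1 - θ) * h)) := by gcongr
      _ = n * (1 - θ) * (θ ^ k * h) := by ring
      _ = θ ^ k * h / 2 := by rw [mul_one_sub_shellRatio]; ring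
  have hδ : θ ^ k * h / 2 ≤ θ ^ (k + 1) * h := by
    rw [pow_succ]
    nlinarith [mul_pos (pow_pos hθ k) hh]
  have hδ' : θ ^ (k + 1) * h ≤ θ ^ k * h := by
    have := pow_le_pow_of_le_one hθ.le (shellRatio_lt_one n).le k.le_succ
    gcongr
  refine ⟨WithLp.toLp 2 w, hwc, of_common_ball (w := y) (δ := θ ^ k * h / 2) hs (by positivity)
    ((ball_subset_openCube (by linarith)).trans hΩ)
    ((ball_subset_openCube (by linarith)).trans hΩ) (ball_subset_ball hδ)
    (ball_subset_ball' (by linarith)) ?_ ?_⟩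
  · rw [NNReal.coe_ofNat]
    linarith
  · rw [NNReal.coe_ofNat]
    linarith

theorem center_of_supDist_le (hs : 1 ≤ s) (hh : 0 < h) (hΩ : openCube c h ⊆ Ω) (k : ℕ)
    (hy : supDist y c ≤ (1 - shellRatio n ^ k) * h) :
    BallLinked s Ω (k * (2 * 2 ^ n)) y (shellRatio n ^ k * h) c h := by
  induction k generalizing y with
  | zero =>
    have hyc : y = c := WithLp.ofLp_injective 2 (by simpa using hy)
    simpa [hyc] using BallLinked.refl s Ω c h
  | succ k ih =>
    obtain ⟨y', hy', hlink⟩ := succ_shell hs hh hΩ hy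
    convert hlink.trans (ih hy') using 1
    push_cast
    ring

end BallLinked

end Cubes

/-! ### Averaging domains tiled by cubes -/

section Tiling

theorem summable_nat_succ_rpow_mul_geometric {θ : ℝ} (hθ₀ : 0 < θ) (hθ₁ : θ < 1) (s : ℝ) :
    Summable fun k : ℕ => ((k : ℝ) + 1) ^ s * θ ^ k := by
  have hθ : ‖θ‖ < 1 := by rwa [Real.norm_of_nonneg hθ₀.le]
  have hsum : Summable fun k : ℕ => θ⁻¹ * (((k + 1 : ℕ) : ℝ) ^ ⌈s⌉₊ * θ ^ (k + 1)) :=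
    ((summable_nat_add_iff (f := fun k : ℕ => (k : ℝ) ^ ⌈s⌉₊ * θ ^ k) 1).2
      (summable_pow_mul_geometric_of_norm_lt_one ⌈s⌉₊ hθ)).mul_left θ⁻¹
  refine hsum.of_nonneg_of_le (fun k => by positivity) fun k => ?_
  have hrpow : ((k : ℝ) + 1) ^ s ≤ ((k : ℝ) + 1) ^ ⌈s⌉₊ := by
    rw [← Real.rpow_natCast]
    exact Real.rpow_le_rpow_of_exponent_le (by simp) (Nat.le_ceil s)
  calc ((k : ℝ) + 1) ^ s * θ ^ k ≤ ((k : ℝ) + 1) ^ ⌈s⌉₊ * θ ^ k := by gcongr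
    _ = θ⁻¹ * (((k + 1 : ℕ) : ℝ) ^ ⌈s⌉₊ * θ ^ (k + 1)) := by
      push_cast
      field_simp
      ring

variable {n : ℕ} {s : ℝ} {Ω : Set (EuclideanSpace ℝ (Fin n))}

/-- The radius of the balls that are averaged over near the `k`-th shell of a cube of half-width
`h`. The factor `1 - shellRatio n` keeps such a ball around the `k`-th shell at distance
`shellRatio n ^ (k + 2) * h` from the faces of the cube. -/
noncomputable def shellRadius (n : ℕ) (h : ℝ) (k : ℕ) : ℝ :=
  shellRatio n ^ (k + 2) * h * (1 - shellRatio n)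

/-- The shell that contains the balls of radius `shellRadius n h k` around the `k`-th shell. -/
def thickShell (c : EuclideanSpace ℝ (Fin n)) (h : ℝ) (k : ℕ) : Set (EuclideanSpace ℝ (Fin n)) :=
  cubeShell c ((1 - 2 * shellRatio n ^ k) * h) ((1 - shellRatio n ^ (k + 2)) * h)

theorem ball_subset_openCube_of_mem_thickShell {c y : EuclideanSpace ℝ (Fin n)} {h : ℝ} {k : ℕ}
    (hy : y ∈ thickShell c h k) : ball y (shellRatio n ^ (k + 2) * h) ⊆ openCube c h :=
  ball_subset_openCube (by linarith [hy.2])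

variable [NeZero n]

theorem shellRadius_pos {h : ℝ} (hh : 0 < h) (k : ℕ) : 0 < shellRadius n h k :=
  mul_pos (mul_pos (pow_pos (shellRatio_pos n) _) hh) (sub_pos.2 (shellRatio_lt_one n))

theorem ball_subset_thickShell {c y : EuclideanSpace ℝ (Fin n)} {h : ℝ} (hh : 0 < h) {k : ℕ}
    (hy : y ∈ cubeShell c ((1 - shellRatio n ^ k) * h) ((1 - shellRatio n ^ (k + 1)) * h)) :
    ball y (shellRadius n h k) ⊆ thickShell c h k := by
  set θ := shellRatio n with hθ_def
  have hθ₀ : 0 < θ := shellRatio_pos n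
  have hθ₁ : θ < 1 := shellRatio_lt_one n
  have hθ_sq : θ ^ 2 ≤ 1 := pow_le_one₀ hθ₀.le hθ₁.le
  refine ball_subset_cubeShell ⟨hy.1.trans' ?_, hy.2.trans ?_⟩ <;>
    rw [shellRadius, ← hθ_def]
  · calc (1 - 2 * θ ^ k) * h + θ ^ (k + 2) * h * (1 - θ)
        = (1 - 2 * θ ^ k) * h + θ ^ 2 * (1 - θ) * (θ ^ k * h) := by ring
      _ ≤ (1 - 2 * θ ^ k) * h + 1 * (θ ^ k * h) := by gcongr; nlinarith
      _ = (1 - θ ^ k) * h := by ring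
  · calc (1 - θ ^ (k + 1)) * h = (1 - θ ^ (k + 2)) * h - θ * (1 - θ) * (θ ^ k * h) := by ring
      _ ≤ (1 - θ ^ (k + 2)) * h - θ ^ 2 * (1 - θ) * (θ ^ k * h) := by
        gcongr
        nlinarith [mul_nonneg hθ₀.le (sub_pos.2 hθ₁).le]
      _ = (1 - θ ^ (k + 2)) * h - θ ^ (k + 2) * h * (1 - θ) := by ring

theorem shellRadius_le {h : ℝ} (hh : 0 < h) (k : ℕ) :
    shellRadius n h k ≤ shellRatio n ^ (k + 2) * h :=
  mul_le_of_le_one_right (mul_pos (pow_pos (shellRatio_pos n) _) hh).le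
    (sub_le_self 1 (shellRatio_pos n).le)

theorem volume_thickShell_le (c : EuclideanSpace ℝ (Fin n)) {h : ℝ} (hh : 0 < h) (k : ℕ) :
    volume (thickShell c h k) ≤
      ENNReal.ofReal (n * (2 * shellRatio n ^ k) * (2 * h) ^ n) := by
  have hθ := pow_pos (shellRatio_pos n)
  exact volume_cubeShell_le c hh.le (by linarith [hθ k])
    (mul_le_of_le_one_left hh.le (by linarith [hθ (k + 2)]))

theorem BallLinked.center_of_mem_thickShell {c y : EuclideanSpace ℝ (Fin n)} {h : ℝ} (hs : 1 ≤ s)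
    (hh : 0 < h) (hΩ : openCube c h ⊆ Ω) {k : ℕ} (hy : y ∈ thickShell c h k) :
    BallLinked s Ω (((2 * n) ^ n + 4 * 2 ^ n) * (k + 1)) y (shellRadius n h k) c h := by
  have hratio : shellRatio n ^ (k + 2) * h = (2 * n : ℝ≥0) * shellRadius n h k :=
    calc shellRatio n ^ (k + 2) * h
        = 2 * (n * (1 - shellRatio n)) * (shellRatio n ^ (k + 2) * h) := by
          rw [mul_one_sub_shellRatio]
          ring
      _ = (2 * n : ℝ≥0) * shellRadius n h k := by
          rw [shellRadius]
          push_cast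
          ring
  have henlarge := BallLinked.of_ball_subset_ball hs
    ((ball_subset_openCube_of_mem_thickShell hy).trans hΩ) (shellRadius_pos hh k)
    (ball_subset_ball (shellRadius_le hh k)) hratio.le
  refine (henlarge.trans (BallLinked.center_of_supDist_le hs hh hΩ (k + 2) hy.2)).mono ?_
  calc (2 * n : ℝ≥0) ^ n + (k + 2 : ℕ) * (2 * 2 ^ n)
      ≤ (2 * n : ℝ≥0) ^ n + (2 * n) ^ n * k + (2 * 2 ^ n * k + (k + 2 : ℕ) * (2 * 2 ^ n)) := by
        gcongr
        · exact le_self_add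
        · exact le_add_self
    _ = ((2 * n) ^ n + 4 * 2 ^ n) * (k + 1) := by
        push_cast
        ring

theorem tsum_rpow_mul_volume_thickShell_ne_top {ι : Type*} (hs : 0 ≤ s) (K : ℝ≥0)
    {c : ι → EuclideanSpace ℝ (Fin n)} {h : ι → ℝ} {N : ι → ℝ≥0} (hh : ∀ i, 0 < h i)
    (hsum : Summable fun i => (1 + N i : ℝ) ^ s * h i ^ n) :
    ∑' q : ι × ℕ, ((1 + (K * (q.2 + 1) + N q.1) : ℝ≥0) : ℝ≥0∞) ^ s *
      volume (thickShell (c q.1) (h q.1) q.2) ≠ ⊤ := by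
  have hθ := shellRatio_pos n
  have hprod : Summable fun q : ι × ℕ => ((1 + N q.1 : ℝ) ^ s * h q.1 ^ n) *
      (((q.2 : ℝ) + 1) ^ s * shellRatio n ^ q.2) :=
    hsum.mul_of_nonneg (summable_nat_succ_rpow_mul_geometric hθ (shellRatio_lt_one n) s)
      (fun i => mul_nonneg (by positivity) (pow_nonneg (hh i).le n)) (fun k => by positivity)
  refine ne_top_of_le_ne_top
    (hprod.mul_left ((1 + K : ℝ) ^ s * (2 * n * 2 ^ n))).tsum_ofReal_ne_top
    (ENNReal.tsum_le_tsum fun q => ?_)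
  obtain ⟨i, k⟩ := q
  have hlink : 1 + (K * (k + 1) + N i) ≤ (1 + K) * ((1 + N i) * (k + 1)) :=
    calc 1 + (K * (k + 1) + N i)
        ≤ 1 + (K * (k + 1) + N i) + (k + N i * k + K * N i * (k + 1)) := le_self_add
      _ = (1 + K) * ((1 + N i) * (k + 1)) := by ring
  calc ((1 + (K * (k + 1) + N i) : ℝ≥0) : ℝ≥0∞) ^ s * volume (thickShell (c i) (h i) k)
      ≤ ((1 + K) * ((1 + N i) * (k + 1)) : ℝ≥0) ^ s *
          ENNReal.ofReal (n * (2 * shellRatio n ^ k) * (2 * h i) ^ n) := by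
        gcongr
        exact volume_thickShell_le (c i) (hh i) k
    _ = ENNReal.ofReal (((1 + K) * ((1 + N i) * (k + 1))) ^ s *
          (n * (2 * shellRatio n ^ k) * (2 * h i) ^ n)) := by
        rw [← ENNReal.ofReal_coe_nnreal, ENNReal.ofReal_rpow_of_nonneg (by positivity) hs,
          ← ENNReal.ofReal_mul (by positivity)]
        push_cast
        rfl
    _ = _ := by
        rw [Real.mul_rpow (by positivity) (by positivity),
          Real.mul_rpow (by positivity) (by positivity)]
        ring_nf

theorem isLsAveragingDomain_of_iUnion_openCube {ι : Type*} [Countable ι] (hs : 1 ≤ s)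
    (hΩ₀ : volume Ω ≠ 0) (hΩ : volume Ω ≠ ⊤) {c : ι → EuclideanSpace ℝ (Fin n)} {h : ι → ℝ}
    {N : ι → ℝ≥0} {x : EuclideanSpace ℝ (Fin n)} {r : ℝ} (hh : ∀ i, 0 < h i)
    (hsub : ∀ i, openCube (c i) (h i) ⊆ Ω) (hcover : Ω ≤ᵐ[volume] ⋃ i, openCube (c i) (h i))
    (hlink : ∀ i, BallLinked s Ω (N i) (c i) (h i) x r)
    (hsum : Summable fun i => (1 + N i : ℝ) ^ s * h i ^ n) : IsLsAveragingDomain s Ω := by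
  have hcover' : Ω ≤ᵐ[volume] ⋃ q : ι × ℕ, cubeShell (c q.1)
      ((1 - shellRatio n ^ q.2) * h q.1) ((1 - shellRatio n ^ (q.2 + 1)) * h q.1) := by
    refine hcover.trans (LE.le.eventuallyLE ?_)
    rw [iUnion_prod']
    exact iUnion_mono fun i =>
      openCube_subset_iUnion_cubeShell (c i) (h i) (shellRatio_pos n) (shellRatio_lt_one n)
  refine isLsAveragingDomain_of_ballLinked_cover (ρ := fun q => shellRadius n (h q.1) q.2)
    (T := fun q => thickShell (c q.1) (h q.1) q.2)
    (N := fun q => ((2 * n) ^ n + 4 * 2 ^ n) * (q.2 + 1) + N q.1) (x := x) (r := r) hs hΩ₀ hΩ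
    (fun q => shellRadius_pos (hh q.1) q.2) (fun q => measurableSet_cubeShell _ _ _)
    (fun q => measurableSet_cubeShell _ _ _) hcover'
    (fun q y hy => ball_subset_thickShell (hh q.1) hy) (fun q y hy => ?_) (fun q y hy => ?_)
    (tsum_rpow_mul_volume_thickShell_ne_top (zero_le_one.trans hs) ((2 * n) ^ n + 4 * 2 ^ n) hh
      hsum)
  · exact (ball_subset_ball (shellRadius_le (hh q.1) q.2)).trans
      ((ball_subset_openCube_of_mem_thickShell hy).trans (hsub q.1))
  · exact (BallLinked.center_of_mem_thickShell hs (hh q.1) (hsub q.1) hy).trans (hlink q.1)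

end Tiling

/-! ### Geometry of the block domain -/

section BlockGeometry

theorem blockEdge_pos (m : ℕ) : 0 < blockEdge m := by
  unfold blockEdge
  positivity

theorem blockEdge_antitone : Antitone blockEdge := fun _ _ h =>
  pow_le_pow_of_le_one (by norm_num) (by norm_num) (Nat.log_mono_right h)

theorem blockEdge_le_one (m : ℕ) : blockEdge m ≤ 1 := pow_le_one₀ (by norm_num) (by norm_num)

theorem blockEdge_le_three_mul_succ (m : ℕ) : blockEdge m ≤ 3 * blockEdge (m + 1) := by
  have hlog : Nat.log 2 (m + 1) ≤ Nat.log 2 m + 1 := by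
    obtain rfl | hm := Nat.eq_zero_or_pos m
    · simp
    · rw [← Nat.log_mul_base one_lt_two hm.ne']
      exact Nat.log_mono_right (by omega)
  calc blockEdge m = 3 * (1 / 3) ^ (Nat.log 2 m + 1) := by
        rw [blockEdge, pow_succ]
        ring
    _ ≤ 3 * blockEdge (m + 1) := by
        gcongr 3 * ?_
        exact pow_le_pow_of_le_one (by norm_num) (by norm_num) hlog

theorem blockBottom_succ {m : ℕ} (hm : 1 ≤ m) :
    blockBottom (m + 1) = blockBottom m + blockEdge m :=
  Finset.sum_Ico_succ_top hm _

theorem blockBottom_eq {m : ℕ} (hm : 1 ≤ m) :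
    blockBottom m = 3 - 3 * (2 / 3) ^ Nat.log 2 m + (m - 2 ^ Nat.log 2 m) * blockEdge m := by
  induction m, hm using Nat.le_induction with
  | base => simp [blockBottom]
  | succ m hm ih =>
    rw [blockBottom_succ hm, ih]
    have hlower := Nat.pow_log_le_self 2 (Nat.one_le_iff_ne_zero.1 hm)
    have hupper := Nat.lt_pow_succ_log_self one_lt_two m
    set j := Nat.log 2 m
    obtain hlt | heq := Nat.lt_or_eq_of_le (Nat.succ_le_of_lt hupper)
    · have hlog : Nat.log 2 (m + 1) = j :=
        Nat.log_eq_of_pow_le_of_lt_pow (hlower.trans m.le_succ) hlt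
      rw [blockEdge, blockEdge, hlog]
      push_cast
      ring
    · have hlog : Nat.log 2 (m + 1) = j + 1 :=
        Nat.log_eq_of_pow_le_of_lt_pow heq.ge
          (heq.trans_lt (Nat.pow_lt_pow_right one_lt_two (j + 1).lt_succ_self))
      have hm_cast : (m : ℝ) = 2 ^ (j + 1) - 1 := by
        rw [eq_sub_iff_add_eq]
        exact_mod_cast heq
      have hcube : (2 / 3 : ℝ) ^ j = 2 ^ j * (1 / 3) ^ j := by rw [← mul_pow]; norm_num
      rw [blockEdge, blockEdge, hlog, Nat.cast_succ, hm_cast]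
      simp only [pow_succ, hcube, show Nat.log 2 m = j from rfl]
      ring

theorem three_sub_le_blockBottom {m : ℕ} (hm : 1 ≤ m) :
    3 - 3 * (2 / 3) ^ Nat.log 2 m ≤ blockBottom m := by
  have hlower : (2 ^ Nat.log 2 m : ℝ) ≤ m := by
    exact_mod_cast Nat.pow_log_le_self 2 (Nat.one_le_iff_ne_zero.1 hm)
  rw [blockBottom_eq hm]
  nlinarith [blockEdge_pos m]

theorem blockBottom_add_blockEdge_le {m : ℕ} (hm : 1 ≤ m) :
    blockBottom m + blockEdge m ≤ 3 - 2 * (2 / 3) ^ Nat.log 2 m := by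
  have hupper : (m + 1 : ℝ) ≤ 2 * 2 ^ Nat.log 2 m := by
    rw [← pow_succ']
    exact_mod_cast Nat.lt_pow_succ_log_self one_lt_two m
  have hcube : (2 / 3 : ℝ) ^ Nat.log 2 m = 2 ^ Nat.log 2 m * blockEdge m := by
    rw [blockEdge, ← mul_pow]
    norm_num
  rw [blockBottom_eq hm]
  nlinarith [blockEdge_pos m]

theorem blockBottom_monotone : Monotone blockBottom := fun _ _ h =>
  Finset.sum_le_sum_of_subset_of_nonneg (Finset.Ico_subset_Ico_right h)
    fun m _ _ => (blockEdge_pos m).le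

theorem blockEdge_eq_rpow (m : ℕ) : blockEdge m = (2 ^ Nat.log 2 m : ℝ) ^ (-Real.logb 2 3) := by
  rw [Real.rpow_neg (by positivity), ← Real.rpow_natCast, ← Real.rpow_mul (by norm_num), mul_comm,
    Real.rpow_mul (by norm_num), Real.rpow_logb (by norm_num) (by norm_num) (by norm_num),
    Real.rpow_natCast, blockEdge, one_div, inv_pow]

theorem logb_two_three_pos : 0 < Real.logb 2 3 := Real.logb_pos (by norm_num) (by norm_num)

theorem rpow_neg_logb_le_blockEdge {m : ℕ} (hm : 1 ≤ m) :
    (m : ℝ) ^ (-Real.logb 2 3) ≤ blockEdge m := by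
  rw [blockEdge_eq_rpow]
  refine Real.rpow_le_rpow_of_nonpos (by positivity) ?_ (neg_nonpos.2 logb_two_three_pos.le)
  exact_mod_cast Nat.pow_log_le_self 2 (Nat.one_le_iff_ne_zero.1 hm)

theorem blockEdge_le_three_mul_rpow_neg_logb {m : ℕ} (hm : 1 ≤ m) :
    blockEdge m ≤ 3 * (m : ℝ) ^ (-Real.logb 2 3) := by
  have hm₀ : (0 : ℝ) < m := by exact_mod_cast hm
  have hupper : (m : ℝ) / 2 ≤ 2 ^ Nat.log 2 m := by
    rw [div_le_iff₀ two_pos, ← pow_succ]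
    exact_mod_cast (Nat.lt_pow_succ_log_self one_lt_two m).le
  calc blockEdge m = (2 ^ Nat.log 2 m : ℝ) ^ (-Real.logb 2 3) := blockEdge_eq_rpow m
    _ ≤ ((m : ℝ) / 2) ^ (-Real.logb 2 3) :=
        Real.rpow_le_rpow_of_nonpos (by positivity) hupper (neg_nonpos.2 logb_two_three_pos.le)
    _ = 3 * (m : ℝ) ^ (-Real.logb 2 3) := by
        rw [Real.div_rpow hm₀.le two_pos.le, Real.rpow_neg two_pos.le,
          Real.rpow_logb (by norm_num) (by norm_num) (by norm_num), div_inv_eq_mul, mul_comm]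

theorem summable_blockEdge_pow_mul_rpow_iff (n : ℕ) (s : ℝ) :
    Summable (fun i : ℕ => blockEdge (i + 1) ^ n * ((i + 1 : ℕ) : ℝ) ^ s) ↔
      s < n * Real.logb 2 3 - 1 := by
  have hpow (i : ℕ) : (((i + 1 : ℕ) : ℝ) ^ (-Real.logb 2 3)) ^ n * ((i + 1 : ℕ) : ℝ) ^ s =
      ((i + 1 : ℕ) : ℝ) ^ (s - n * Real.logb 2 3) := by
    have hi : (0 : ℝ) < (i + 1 : ℕ) := by positivity
    rw [← Real.rpow_natCast, ← Real.rpow_mul hi.le, ← Real.rpow_add hi]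
    ring_nf
  have hiff : Summable (fun i : ℕ => ((i + 1 : ℕ) : ℝ) ^ (s - n * Real.logb 2 3)) ↔
      s < n * Real.logb 2 3 - 1 := by
    rw [summable_nat_add_iff (f := fun i : ℕ => (i : ℝ) ^ (s - n * Real.logb 2 3)) 1,
      Real.summable_nat_rpow]
    constructor <;> intro h <;> linarith
  rw [← hiff]
  constructor <;> intro h
  · refine h.of_nonneg_of_le (fun i => by positivity) fun i => ?_
    rw [← hpow]
    gcongr
    exact rpow_neg_logb_le_blockEdge i.succ_pos
  · refine (h.mul_left (3 ^ n)).of_nonneg_of_le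
      (fun i => mul_nonneg (pow_nonneg (blockEdge_pos _).le n) (by positivity)) fun i => ?_
    rw [← hpow, ← mul_assoc, ← mul_pow]
    gcongr
    · exact (blockEdge_pos _).le
    · exact blockEdge_le_three_mul_rpow_neg_logb i.succ_pos

variable (n : ℕ) [NeZero n]

/-- The point at height `t` on the common vertical axis of the cubes of the block domain. -/
noncomputable def axisPoint (t : ℝ) : EuclideanSpace ℝ (Fin n) :=
  WithLp.toLp 2 fun i => if i = 0 then t else 1 / 2

/-- The centre of the `m`-th cube of the block domain. -/
noncomputable def blockCenter (m : ℕ) : EuclideanSpace ℝ (Fin n) :=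
  axisPoint n (blockBottom m + blockEdge m / 2)

variable {n} {m : ℕ}

@[simp]
theorem axisPoint_zero (t : ℝ) : axisPoint n t 0 = t := by simp [axisPoint]

theorem axisPoint_of_ne {i : Fin n} (hi : i ≠ 0) (t : ℝ) : axisPoint n t i = 1 / 2 := by
  simp [axisPoint, hi]

theorem dist_axisPoint (a b : ℝ) : dist (axisPoint n a) (axisPoint n b) = |a - b| := by
  rw [EuclideanSpace.dist_eq, Finset.sum_eq_single 0]
  · simp [Real.dist_eq, Real.sqrt_sq_eq_abs]
  · intro i _ hi
    simp [axisPoint_of_ne hi]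
  · simp

theorem ball_axisPoint_subset_ball {a b δ r : ℝ} (hlower : b - r ≤ a - δ) (hupper : a + δ ≤ b + r) :
    ball (axisPoint n a) δ ⊆ ball (axisPoint n b) r := by
  refine ball_subset_ball' ?_
  rw [dist_axisPoint, ← le_sub_iff_add_le', abs_le]
  constructor <;> linarith

theorem supDist_axisPoint_le_iff {z : EuclideanSpace ℝ (Fin n)} {t h : ℝ} (hh : 0 ≤ h) :
    supDist z (axisPoint n t) ≤ h ↔ |z 0 - t| ≤ h ∧ ∀ i, i ≠ 0 → |z i - 1 / 2| ≤ h := by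
  rw [dist_pi_le_iff hh]
  refine ⟨fun H => ⟨by simpa [Real.dist_eq] using H 0, fun i hi => ?_⟩, fun H i => ?_⟩
  · simpa [Real.dist_eq, axisPoint_of_ne hi] using H i
  · obtain rfl | hi := eq_or_ne i 0
    · simpa [Real.dist_eq] using H.1
    · simpa [Real.dist_eq, axisPoint_of_ne hi] using H.2 i hi

theorem mem_blockCube_iff {z : EuclideanSpace ℝ (Fin n)} :
    z ∈ blockCube n m ↔ supDist z (blockCenter n m) ≤ blockEdge m / 2 := by
  rw [blockCenter, supDist_axisPoint_le_iff (half_pos (blockEdge_pos m)).le, abs_le]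
  refine and_congr_left' ⟨fun h => ?_, fun h => ?_⟩ <;> constructor <;> linarith [h.1, h.2]

theorem blockDomain_subset_iUnion_blockCube (n : ℕ) [NeZero n] :
    blockDomain n ⊆ ⋃ i : ℕ, blockCube n (i + 1) := by
  refine interior_subset.trans (iUnion₂_subset fun m hm => ?_)
  obtain ⟨i, rfl⟩ := Nat.exists_eq_add_of_le' (mem_Ici.1 hm)
  exact subset_iUnion (fun i => blockCube n (i + 1)) i

theorem subset_blockDomain {U : Set (EuclideanSpace ℝ (Fin n))} (hU : IsOpen U)
    (h : ∀ z ∈ U, ∃ m, 1 ≤ m ∧ z ∈ blockCube n m) : U ⊆ blockDomain n :=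
  interior_maximal (fun z hz => by simpa using h z hz) hU

theorem openCube_blockCenter_subset_blockDomain (hm : 1 ≤ m) :
    openCube (blockCenter n m) (blockEdge m / 2) ⊆ blockDomain n :=
  subset_blockDomain (isOpen_openCube _ _) fun _ hz => ⟨m, hm, mem_blockCube_iff.2 (le_of_lt hz)⟩

theorem ball_blockCenter_subset_blockDomain (hm : 1 ≤ m) :
    ball (blockCenter n m) (blockEdge m / 2) ⊆ blockDomain n :=
  (ball_subset_openCube (by simp)).trans (openCube_blockCenter_subset_blockDomain hm)

theorem ball_face_subset_blockDomain (hm : 1 ≤ m) :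
    ball (axisPoint n (blockBottom (m + 1))) (blockEdge (m + 1) / 2) ⊆ blockDomain n := by
  refine subset_blockDomain isOpen_ball fun z hz => ?_
  obtain ⟨hz₀, hz_ne⟩ := (supDist_axisPoint_le_iff (half_pos (blockEdge_pos _)).le).1
    ((supDist_le_dist _ _).trans (mem_ball.1 hz).le)
  have hbottom := blockBottom_succ hm
  have hedge : blockEdge (m + 1) ≤ blockEdge m := blockEdge_antitone m.le_succ
  have hpos := blockEdge_pos (m + 1)
  rw [abs_le] at hz₀
  obtain hz_le | hz_ge := le_total (z 0) (blockBottom (m + 1))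
  · exact ⟨m, hm, ⟨by linarith, by linarith⟩, fun i hi => (hz_ne i hi).trans (by linarith)⟩
  · exact ⟨m + 1, by omega, ⟨hz_ge, by linarith⟩, hz_ne⟩

theorem volume_blockDomain_ne_zero (n : ℕ) [NeZero n] : volume (blockDomain n) ≠ 0 :=
  fun h => (measure_ball_pos volume _ (half_pos (blockEdge_pos 1))).ne'
    (measure_mono_null (ball_blockCenter_subset_blockDomain le_rfl) h)

theorem volume_blockDomain_ne_top (n : ℕ) [NeZero n] : volume (blockDomain n) ≠ ⊤ := by
  have hsub : blockDomain n ⊆ openCube (axisPoint n (3 / 2)) 2 := by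
    refine (blockDomain_subset_iUnion_blockCube n).trans (iUnion_subset fun i z hz => ?_)
    have hpow : (0 : ℝ) < (2 / 3) ^ Nat.log 2 (i + 1) := by positivity
    have hbottom : 0 ≤ blockBottom (i + 1) := Finset.sum_nonneg fun m _ => (blockEdge_pos m).le
    have htop := blockBottom_add_blockEdge_le (m := i + 1) (by omega)
    refine lt_of_le_of_lt ((supDist_axisPoint_le_iff (h := 3 / 2) (by norm_num)).2
      ⟨abs_le.2 ⟨by linarith [hz.1.1], by linarith [hz.1.2]⟩, fun j hj => ?_⟩) (by norm_num)
    linarith [hz.2 j hj, blockEdge_le_one (i + 1)]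
  refine ne_top_of_le_ne_top ?_ (measure_mono hsub)
  rw [volume_openCube _ two_pos]
  exact ENNReal.ofReal_ne_top

theorem blockDomain_ae_le_iUnion_openCube (n : ℕ) [NeZero n] :
    blockDomain n ≤ᵐ[volume]
      ⋃ i : ℕ, openCube (blockCenter n (i + 1)) (blockEdge (i + 1) / 2) := by
  have hboundary : ∀ᵐ z : EuclideanSpace ℝ (Fin n), ∀ i : ℕ,
      supDist z (blockCenter n (i + 1)) ≠ blockEdge (i + 1) / 2 :=
    ae_all_iff.2 fun i => measure_eq_zero_iff_ae_notMem.1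
      (volume_setOf_supDist_eq _ (half_pos (blockEdge_pos (i + 1))).ne')
  filter_upwards [hboundary] with z hz hzΩ
  obtain ⟨i, hi⟩ := mem_iUnion.1 (blockDomain_subset_iUnion_blockCube n hzΩ)
  exact mem_iUnion.2 ⟨i, lt_of_le_of_ne (mem_blockCube_iff.1 hi) (hz i)⟩

theorem ballLinked_blockCenter_succ {s : ℝ} (hs : 1 ≤ s) (hm : 1 ≤ m) :
    BallLinked s (blockDomain n) (4 * 6 ^ n) (blockCenter n (m + 1)) (blockEdge (m + 1) / 2)
      (blockCenter n m) (blockEdge m / 2) := by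
  have hbottom := blockBottom_succ hm
  have hpos := blockEdge_pos (m + 1)
  have hedge : blockEdge (m + 1) ≤ blockEdge m := blockEdge_antitone m.le_succ
  have hratio := blockEdge_le_three_mul_succ m
  set δ := blockEdge (m + 1) / 4 with hδ
  have habove : BallLinked s (blockDomain n) (2 * 6 ^ n)
      (blockCenter n (m + 1)) (blockEdge (m + 1) / 2)
      (axisPoint n (blockBottom (m + 1))) (blockEdge (m + 1) / 2) :=
    .of_common_ball (w := axisPoint n (blockBottom (m + 1) + δ)) (δ := δ) hs (by positivity)
      (ball_blockCenter_subset_blockDomain (by omega)) (ball_face_subset_blockDomain hm)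
      (ball_axisPoint_subset_ball (by linarith) (by linarith))
      (ball_axisPoint_subset_ball (by linarith) (by linarith))
      (by norm_num; linarith) (by norm_num; linarith)
  have hbelow : BallLinked s (blockDomain n) (2 * 6 ^ n)
      (axisPoint n (blockBottom (m + 1))) (blockEdge (m + 1) / 2)
      (blockCenter n m) (blockEdge m / 2) :=
    .of_common_ball (w := axisPoint n (blockBottom (m + 1) - δ)) (δ := δ) hs (by positivity)
      (ball_face_subset_blockDomain hm) (ball_blockCenter_subset_blockDomain hm)
      (ball_axisPoint_subset_ball (by linarith) (by linarith))
      (ball_axisPoint_subset_ball (by linarith) (by linarith))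
      (by norm_num; linarith) (by norm_num; linarith)
  exact (habove.trans hbelow).mono (by ring_nf; rfl)

theorem ballLinked_blockCenter_one {s : ℝ} (hs : 1 ≤ s) (i : ℕ) :
    BallLinked s (blockDomain n) (i * (4 * 6 ^ n)) (blockCenter n (i + 1)) (blockEdge (i + 1) / 2)
      (blockCenter n 1) (blockEdge 1 / 2) := by
  induction i with
  | zero => simpa using BallLinked.refl s (blockDomain n) (blockCenter n 1) (blockEdge 1 / 2)
  | succ i ih =>
    exact ((ballLinked_blockCenter_succ hs i.succ_pos).trans ih).mono (by push_cast; ring_nf; rfl)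

theorem isLsAveragingDomain_blockDomain {s : ℝ} (hs : 1 ≤ s) (h : s < n * Real.logb 2 3 - 1) :
    IsLsAveragingDomain s (blockDomain n) := by
  refine isLsAveragingDomain_of_iUnion_openCube (c := fun i : ℕ => blockCenter n (i + 1))
    (h := fun i => blockEdge (i + 1) / 2) (N := fun i => i * (4 * 6 ^ n)) (x := blockCenter n 1)
    (r := blockEdge 1 / 2) hs (volume_blockDomain_ne_zero n) (volume_blockDomain_ne_top n)
    (fun i => half_pos (blockEdge_pos _))
    (fun i => openCube_blockCenter_subset_blockDomain i.succ_pos)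
    (blockDomain_ae_le_iUnion_openCube n) (ballLinked_blockCenter_one hs) ?_
  refine (((summable_blockEdge_pow_mul_rpow_iff n s).2 h).mul_left
    (((4 * 6 ^ n : ℝ)) ^ s)).of_nonneg_of_le
    (fun i => mul_nonneg (by positivity) (pow_nonneg (half_pos (blockEdge_pos _)).le n))
    fun i => ?_
  have hK : (1 : ℝ) ≤ 4 * 6 ^ n := by
    linarith [one_le_pow₀ (n := n) (by norm_num : (1 : ℝ) ≤ 6)]
  have hpos := blockEdge_pos (i + 1)
  calc (1 + (i * (4 * 6 ^ n) : ℝ≥0) : ℝ) ^ s * (blockEdge (i + 1) / 2) ^ n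
      ≤ ((4 * 6 ^ n) * (i + 1 : ℕ) : ℝ) ^ s * blockEdge (i + 1) ^ n := by
        push_cast
        gcongr
        · linarith
        · linarith
    _ = (4 * 6 ^ n) ^ s * (blockEdge (i + 1) ^ n * ((i + 1 : ℕ) : ℝ) ^ s) := by
        rw [Real.mul_rpow (by positivity) (by positivity)]
        ring

end BlockGeometry

/-! ### Unbounded functions of bounded oscillation on the block domain -/

section Tip

theorem hasDerivAt_arcsin_div {ρ t : ℝ} (hρ : 0 < ρ) (ht : |t| < ρ) :
    HasDerivAt (fun t => Real.arcsin (t / ρ)) (1 / √(ρ ^ 2 - t ^ 2)) t := by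
  obtain ⟨hlower, hupper⟩ := abs_lt.1 ht
  have hlower' : t / ρ ≠ -1 := by rw [Ne, div_eq_iff hρ.ne']; linarith
  have hupper' : t / ρ ≠ 1 := by rw [Ne, div_eq_iff hρ.ne']; linarith
  have hscale : √(1 - (t / ρ) ^ 2) * ρ = √(ρ ^ 2 - t ^ 2) := by
    rw [← Real.sqrt_sq hρ.le, ← Real.sqrt_mul' _ (sq_nonneg ρ), Real.sqrt_sq hρ.le]
    congr 1
    field_simp
  rw [← hscale, ← one_div_mul_one_div]
  exact (Real.hasDerivAt_arcsin hlower' hupper').comp t ((hasDerivAt_id t).div_const ρ)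

theorem norm_sub_le_mul_pi_of_norm_deriv_le {E : Type*} [NormedAddCommGroup E] [NormedSpace ℝ E]
    {g g' : ℝ → E} {K ρ : ℝ} (hg : ∀ t ∈ Ioo (-ρ) ρ, HasDerivAt g (g' t) t)
    (hg' : ∀ t ∈ Ioo (-ρ) ρ, ‖g' t‖ ≤ K / √(ρ ^ 2 - t ^ 2)) {a b : ℝ} (ha : a ∈ Ioo (-ρ) ρ)
    (hb : b ∈ Ioo (-ρ) ρ) : ‖g b - g a‖ ≤ K * Real.pi := by
  wlog hab : a ≤ b generalizing a b
  · rw [norm_sub_rev]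
    exact this hb ha (le_of_not_ge hab)
  have hρ : 0 < ρ := by linarith [ha.1, ha.2]
  have hsqrt {t : ℝ} (ht : t ∈ Ioo (-ρ) ρ) : 0 < √(ρ ^ 2 - t ^ 2) :=
    Real.sqrt_pos.2 (sub_pos.2 (sq_lt_sq' ht.1 ht.2))
  have hK : 0 ≤ K := by
    simpa using (le_div_iff₀ (hsqrt ha)).1 ((norm_nonneg _).trans (hg' a ha))
  have hmem {t : ℝ} (ht : t ∈ Icc a b) : t ∈ Ioo (-ρ) ρ :=
    ⟨ha.1.trans_le ht.1, ht.2.trans_lt hb.2⟩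
  have harcsin {t : ℝ} (ht : t ∈ Ioo (-ρ) ρ) :
      HasDerivAt (fun t => K * (Real.arcsin (t / ρ) - Real.arcsin (a / ρ)))
        (K / √(ρ ^ 2 - t ^ 2)) t := by
    simpa only [mul_one_div] using
      ((hasDerivAt_arcsin_div hρ (abs_lt.2 ht)).sub_const (Real.arcsin (a / ρ))).const_mul K
  have hcomparison : ‖g b - g a‖ ≤ K * (Real.arcsin (b / ρ) - Real.arcsin (a / ρ)) :=
    image_norm_le_of_norm_deriv_right_le_deriv_boundary' (f := fun t => g t - g a) (f' := g')
      (fun t ht => ((hg t (hmem ht)).sub_const (g a)).continuousAt.continuousWithinAt)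
      (fun t ht => ((hg t (hmem (Ico_subset_Icc_self ht))).sub_const (g a)).hasDerivWithinAt)
      (by simp)
      (fun t ht => (harcsin (hmem ht)).continuousAt.continuousWithinAt)
      (fun t ht => (harcsin (hmem (Ico_subset_Icc_self ht))).hasDerivWithinAt)
      (fun t ht => hg' t (hmem (Ico_subset_Icc_self ht))) (right_mem_Icc.2 hab)
  refine hcomparison.trans ?_
  gcongr
  linarith [Real.arcsin_le_pi_div_two (b / ρ), Real.neg_pi_div_two_le_arcsin (a / ρ)]

theorem sqrt_sub_sq_le_of_forall_mem_ball {ι : Type*} [Fintype ι] {x : EuclideanSpace ℝ ι} {ρ : ℝ}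
    {i j : ι} (hij : i ≠ j) {c : ℝ} {W : ℝ → ℝ} (hW : ∀ z ∈ ball x ρ, |z j - c| ≤ W (z i)) {t : ℝ}
    (ht : |t| < ρ) : √(ρ ^ 2 - t ^ 2) ≤ W (x i + t) := by
  classical
  have hρ : 0 < ρ := (abs_nonneg t).trans_lt ht
  have hline {w : ℝ} (hw : w ^ 2 < ρ ^ 2 - t ^ 2) : |x j + w - c| ≤ W (x i + t) := by
    have hmem : x + (EuclideanSpace.single i t + EuclideanSpace.single j w) ∈ ball x ρ := by
      rw [mem_ball, dist_self_add_left, ← abs_of_pos hρ, ← abs_norm, ← sq_lt_sq, norm_add_sq_real,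
        EuclideanSpace.inner_single_left]
      simpa [hij, lt_sub_iff_add_lt'] using hw
    simpa [hij, hij.symm] using hW _ hmem
  refine le_of_forall_lt_imp_le_of_dense fun w hw => ?_
  obtain hw_neg | hw_nonneg := lt_or_ge w 0
  · refine hw_neg.le.trans ((abs_nonneg _).trans (hline (w := 0) ?_))
    have := sq_lt_sq' (abs_lt.1 ht).1 (abs_lt.1 ht).2
    nlinarith
  · have hsq : w ^ 2 < ρ ^ 2 - t ^ 2 := (Real.lt_sqrt hw_nonneg).1 hw
    have hplus := (abs_le.1 (hline hsq)).2
    have hminus := (abs_le.1 (hline (w := -w) (by rwa [neg_sq]))).1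
    linarith

/-- The exponent `β = log_{3/2} 2` of the cusp at the tip of the block domain: at distance `τ` below
the tip the cubes have index of order `τ ^ (-β)` and edge length of order `τ ^ (β + 1)`. -/
noncomputable def tipExponent : ℝ := Real.logb (3 / 2) 2

theorem tipExponent_pos : 0 < tipExponent := Real.logb_pos (by norm_num) (by norm_num)

theorem two_thirds_rpow_neg_tipExponent : (2 / 3 : ℝ) ^ (-tipExponent) = 2 := by
  rw [← inv_div, Real.inv_rpow (by norm_num), Real.rpow_neg (by norm_num), inv_inv, tipExponent,
    Real.rpow_logb (by norm_num) (by norm_num) (by norm_num)]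

theorem two_thirds_rpow_tipExponent_add_one : (2 / 3 : ℝ) ^ (tipExponent + 1) = 1 / 3 := by
  rw [Real.rpow_add (by norm_num), ← neg_neg tipExponent, Real.rpow_neg (by norm_num),
    two_thirds_rpow_neg_tipExponent]
  norm_num

theorem blockEdge_eq_two_thirds_rpow (m : ℕ) :
    blockEdge m = ((2 / 3 : ℝ) ^ Nat.log 2 m) ^ (tipExponent + 1) := by
  rw [← Real.rpow_pow_comm (by norm_num), two_thirds_rpow_tipExponent_add_one, blockEdge]

variable {n : ℕ} [NeZero n]

theorem two_thirds_pow_lt_three_sub {m : ℕ} (hm : 1 ≤ m) {z : EuclideanSpace ℝ (Fin n)}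
    (hz : z ∈ blockCube n m) : (2 / 3 : ℝ) ^ Nat.log 2 m < 3 - z 0 := by
  have hpow : (0 : ℝ) < (2 / 3) ^ Nat.log 2 m := by positivity
  linarith [hz.1.2, blockBottom_add_blockEdge_le hm]

theorem exists_mem_blockCube_of_mem_blockDomain {z : EuclideanSpace ℝ (Fin n)}
    (hz : z ∈ blockDomain n) : ∃ m, 1 ≤ m ∧ z ∈ blockCube n m := by
  simpa using interior_subset hz

theorem three_sub_pos_of_mem_blockDomain {z : EuclideanSpace ℝ (Fin n)} (hz : z ∈ blockDomain n) :
    0 < 3 - z 0 := by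
  obtain ⟨m, hm, hzm⟩ := exists_mem_blockCube_of_mem_blockDomain hz
  exact lt_trans (by positivity) (two_thirds_pow_lt_three_sub hm hzm)

theorem abs_sub_one_half_le_of_mem_blockDomain {z : EuclideanSpace ℝ (Fin n)}
    (hz : z ∈ blockDomain n) {i : Fin n} (hi : i ≠ 0) :
    |z i - 1 / 2| ≤ (3 - z 0) ^ (tipExponent + 1) / 2 := by
  obtain ⟨m, hm, hzm⟩ := exists_mem_blockCube_of_mem_blockDomain hz
  refine (hzm.2 i hi).trans ?_
  rw [blockEdge_eq_two_thirds_rpow]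
  gcongr
  · linarith [tipExponent_pos]
  · exact (two_thirds_pow_lt_three_sub hm hzm).le

/-- The function comparable to `m` on the `m`-th cube of the block domain that shows the failure of
the averaging property. -/
noncomputable def tipFunction (z : EuclideanSpace ℝ (Fin n)) : ℝ := (3 - z 0) ^ (-tipExponent)

theorem continuousOn_tipFunction : ContinuousOn tipFunction (blockDomain n) :=
  ContinuousOn.rpow_const (by fun_prop) fun _ hz => .inl (three_sub_pos_of_mem_blockDomain hz).ne'

theorem locallyIntegrableOn_tipFunction : LocallyIntegrableOn tipFunction (blockDomain n) :=
  continuousOn_tipFunction.locallyIntegrableOn isOpen_interior.measurableSet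

theorem three_sub_pos_of_ball_subset_blockDomain {x : EuclideanSpace ℝ (Fin n)} {r t : ℝ}
    (hx : ball x r ⊆ blockDomain n) (ht : |t| < r) : 0 < 3 - (x 0 + t) := by
  have hmem : x + EuclideanSpace.single 0 t ∈ ball x r := by simpa using ht
  simpa using three_sub_pos_of_mem_blockDomain (hx hmem)

theorem sqrt_sub_sq_le_of_ball_subset_blockDomain (hn : 2 ≤ n) {x : EuclideanSpace ℝ (Fin n)}
    {r t : ℝ} (hx : ball x r ⊆ blockDomain n) (ht : |t| < r) :
    √(r ^ 2 - t ^ 2) ≤ (3 - (x 0 + t)) ^ (tipExponent + 1) / 2 := by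
  have hi : (⟨1, hn⟩ : Fin n) ≠ 0 := fun h => absurd (congrArg Fin.val h) (by simp)
  exact sqrt_sub_sq_le_of_forall_mem_ball (W := fun τ => (3 - τ) ^ (tipExponent + 1) / 2) hi.symm
    (fun z hz => abs_sub_one_half_le_of_mem_blockDomain (hx hz) hi) ht

theorem abs_tipFunction_sub_le (hn : 2 ≤ n) {x z : EuclideanSpace ℝ (Fin n)} {r : ℝ}
    (hx : ball x r ⊆ blockDomain n) (hz : z ∈ ball x r) :
    |tipFunction z - tipFunction x| ≤ tipExponent / 2 * Real.pi := by
  have hr : 0 < r := pos_of_mem_ball hz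
  have hβ := tipExponent_pos
  have hderiv (t : ℝ) (ht : t ∈ Ioo (-r) r) :
      HasDerivAt (fun t => (3 - (x 0 + t)) ^ (-tipExponent))
        (tipExponent * (3 - (x 0 + t)) ^ (-tipExponent - 1)) t := by
    simpa using (((hasDerivAt_id t).const_add (x 0)).const_sub 3).rpow_const
      (p := -tipExponent) (.inl (three_sub_pos_of_ball_subset_blockDomain hx (abs_lt.2 ht)).ne')
  have hbound (t : ℝ) (ht : t ∈ Ioo (-r) r) :
      ‖tipExponent * (3 - (x 0 + t)) ^ (-tipExponent - 1)‖ ≤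
        tipExponent / 2 / √(r ^ 2 - t ^ 2) := by
    have hτ := three_sub_pos_of_ball_subset_blockDomain hx (abs_lt.2 ht)
    have hslice := sqrt_sub_sq_le_of_ball_subset_blockDomain hn hx (abs_lt.2 ht)
    have hsqrt : 0 < √(r ^ 2 - t ^ 2) := Real.sqrt_pos.2 (sub_pos.2 (sq_lt_sq' ht.1 ht.2))
    rw [← neg_add', Real.rpow_neg hτ.le, Real.norm_of_nonneg (by positivity),
      ← div_eq_mul_inv, div_div, div_le_div_iff₀ (by positivity) (by positivity)]
    gcongr
    linarith
  have hz₀ : z 0 - x 0 ∈ Ioo (-r) r := by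
    rw [mem_Ioo, ← abs_lt]
    exact (PiLp.norm_apply_le (z - x) 0).trans_lt (mem_ball_iff_norm.1 hz)
  simpa [tipFunction] using norm_sub_le_mul_pi_of_norm_deriv_le hderiv hbound
    (show (0 : ℝ) ∈ Ioo (-r) r by simpa) hz₀

theorem le_tipFunction {m : ℕ} (hm : 1 ≤ m) {z : EuclideanSpace ℝ (Fin n)}
    (hz : z ∈ blockCube n m) : 3 ^ (-tipExponent) / 2 * m ≤ tipFunction z := by
  have hlog : (m : ℝ) / 2 ≤ 2 ^ Nat.log 2 m := by
    rw [div_le_iff₀ two_pos, ← pow_succ]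
    exact_mod_cast (Nat.lt_pow_succ_log_self one_lt_two m).le
  have hpos : 0 < 3 - z 0 := lt_trans (by positivity) (two_thirds_pow_lt_three_sub hm hz)
  calc (3 : ℝ) ^ (-tipExponent) / 2 * m = 3 ^ (-tipExponent) * (m / 2) := by ring
    _ ≤ 3 ^ (-tipExponent) * 2 ^ Nat.log 2 m := by gcongr
    _ = (3 * (2 / 3) ^ Nat.log 2 m) ^ (-tipExponent) := by
        rw [Real.mul_rpow (by norm_num) (by positivity), ← Real.rpow_pow_comm (by norm_num),
          two_thirds_rpow_neg_tipExponent]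
    _ ≤ tipFunction z :=
        Real.rpow_le_rpow_of_nonpos hpos (by linarith [hz.1.1, three_sub_le_blockBottom hm])
          (neg_nonpos.2 tipExponent_pos.le)

theorem hasBallOscillationLE_tipFunction (hn : 2 ≤ n) {s : ℝ} (hs : 1 ≤ s) :
    HasBallOscillationLE s (blockDomain n) tipFunction
      (2 * (tipExponent / 2 * Real.pi).toNNReal) :=
  hasBallOscillationLE_of_abs_sub_center_le hs locallyIntegrableOn_tipFunction fun _ _ _ hx _ hz =>
    (abs_tipFunction_sub_le hn hx hz).trans (Real.le_coe_toNNReal _)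

theorem pairwise_disjoint_openCube_blockCenter :
    Pairwise (Function.onFun Disjoint fun i : ℕ =>
      openCube (blockCenter n (i + 1)) (blockEdge (i + 1) / 2)) := by
  have hslabs : Pairwise (Function.onFun Disjoint fun i : ℕ =>
      (fun z : EuclideanSpace ℝ (Fin n) => z 0) ⁻¹'
        Ioo (blockBottom (i + 1)) (blockBottom (i + 1 + 1))) :=
    ((blockBottom_monotone.comp fun _ _ h => Nat.succ_le_succ h
      ).pairwise_disjoint_on_Ioo_succ).mono fun _ _ h => h.preimage _
  refine hslabs.mono fun i j h => h.mono ?_ ?_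
  all_goals
    intro z hz
    have hz₀ := (dist_le_pi_dist (WithLp.ofLp z) (WithLp.ofLp (blockCenter n _)) 0).trans_lt hz
    rw [blockCenter, axisPoint_zero, Real.dist_eq, abs_lt] at hz₀
    rw [mem_preimage, blockBottom_succ (Nat.le_add_left 1 _)]
    constructor <;> linarith

theorem ofReal_le_setLIntegral_tipFunction {s : ℝ} (hs : 0 ≤ s) {m : ℕ} (hm : 1 ≤ m) :
    ENNReal.ofReal ((3 ^ (-tipExponent) / 2) ^ s * (blockEdge m ^ n * (m : ℝ) ^ s)) ≤
      ∫⁻ z in openCube (blockCenter n m) (blockEdge m / 2), ‖tipFunction z‖ₑ ^ s := by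
  have hvol : volume (openCube (blockCenter n m) (blockEdge m / 2)) =
      ENNReal.ofReal (blockEdge m ^ n) := by
    rw [volume_openCube _ (half_pos (blockEdge_pos m)), mul_div_cancel₀ _ two_ne_zero]
  calc ENNReal.ofReal ((3 ^ (-tipExponent) / 2) ^ s * (blockEdge m ^ n * (m : ℝ) ^ s))
      = ∫⁻ _ in openCube (blockCenter n m) (blockEdge m / 2),
          ENNReal.ofReal (3 ^ (-tipExponent) / 2 * m) ^ s := by
        rw [setLIntegral_const, hvol, ENNReal.ofReal_rpow_of_nonneg (by positivity) hs,
          ← ENNReal.ofReal_mul (by positivity), Real.mul_rpow (by positivity) (by positivity)]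
        ring_nf
    _ ≤ ∫⁻ z in openCube (blockCenter n m) (blockEdge m / 2), ‖tipFunction z‖ₑ ^ s := by
        refine setLIntegral_mono' (isOpen_openCube _ _).measurableSet fun z hz => ?_
        gcongr
        rw [Real.enorm_eq_ofReal_abs]
        exact ENNReal.ofReal_le_ofReal
          ((le_tipFunction hm (mem_blockCube_iff.2 (le_of_lt hz))).trans (le_abs_self _))

theorem summable_of_memLp_tipFunction {s : ℝ} (hs : 0 < s)
    (h : MemLp tipFunction (ENNReal.ofReal s) (volume.restrict (blockDomain n))) :
    Summable fun i : ℕ => blockEdge (i + 1) ^ n * ((i + 1 : ℕ) : ℝ) ^ s := by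
  set κ : ℝ := 3 ^ (-tipExponent) / 2
  have hκ : 0 < κ := by positivity
  have hfinite : ∫⁻ z in blockDomain n, ‖tipFunction z‖ₑ ^ s < ⊤ := by
    simpa [ENNReal.toReal_ofReal hs.le] using (eLpNorm_lt_top_iff_lintegral_rpow_enorm_lt_top
      (by simpa using hs) ENNReal.ofReal_ne_top).1 h.2
  have htsum : ∑' i : ℕ,
      ENNReal.ofReal (κ ^ s * (blockEdge (i + 1) ^ n * ((i + 1 : ℕ) : ℝ) ^ s)) ≠ ⊤ := by
    refine ne_top_of_le_ne_top hfinite.ne ((ENNReal.tsum_le_tsum fun i =>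
      ofReal_le_setLIntegral_tipFunction hs.le i.succ_pos).trans ?_)
    rw [← lintegral_iUnion (fun i => (isOpen_openCube _ _).measurableSet)
      pairwise_disjoint_openCube_blockCenter]
    exact lintegral_mono_set
      (iUnion_subset fun i => openCube_blockCenter_subset_blockDomain i.succ_pos)
  refine (summable_mul_left_iff (Real.rpow_pos_of_pos hκ s).ne').1
    ((ENNReal.summable_toReal htsum).congr fun i => ENNReal.toReal_ofReal ?_)
  exact mul_nonneg (by positivity)
    (mul_nonneg (pow_nonneg (blockEdge_pos _).le n) (by positivity))

end Tip

/-- The block domain is `L^s`-averaging iff `s < n·log₂ 3 − 1`. -/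
theorem blockDomain_LsAveraging_iff (n : ℕ) [NeZero n] (hn : 2 ≤ n) (s : ℝ) (hs : 1 ≤ s) :
    IsLsAveragingDomain s (blockDomain n) ↔ s < n * Real.logb 2 3 - 1 := by
  have hs₀ : 0 < s := zero_lt_one.trans_le hs
  refine ⟨fun h => ?_, isLsAveragingDomain_blockDomain hs⟩
  have htip : MemLp tipFunction (ENNReal.ofReal s) (volume.restrict (blockDomain n)) :=
    h.memLp_of_hasBallOscillationLE hs₀ (volume_blockDomain_ne_zero n)
      (volume_blockDomain_ne_top n) locallyIntegrableOn_tipFunction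
      (hasBallOscillationLE_tipFunction hn hs)
  exact (summable_blockEdge_pow_mul_rpow_iff n s).1 (summable_of_memLp_tipFunction hs₀ htip)
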